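/- Let X be a Cantor space, K a dynamical simplex on X, and G the group of all homeomorphisms of X preserving every measure in K, endowed with the topology of uniform convergence. Then every minimal homeomorphism belonging to G lies in the closure (in G) of the set of K-saturated elements of G. -/

import Mathlib

open MeasureTheory

namespace DynSimplex

variable {X : Type*} [TopologicalSpace X] [MeasurableSpace X] [OpensMeasurableSpace X]

/-- `g` preserves the probability measure `μ`, i.e. `g_*μ = μ`. -/
def Preserves (g : X ≃ₜ X) (μ : ProbabilityMeasure X) : Prop :=
  (μ : Measure X).map g = (μ : Measure X)

/-- A homeomorphism is minimal if all of its (two-sided) orbits are dense. -/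
def IsMinimal (g : X ≃ₜ X) : Prop :=
  ∀ x : X, Dense (Set.range fun n : ℤ => (g.toEquiv ^ n) x)

/-- A set of probability measures is good if for all clopen `A`, `B` with `μ A < μ B` for
all `μ ∈ K`, there is a clopen `C ⊆ B` with `μ C = μ A` for all `μ ∈ K`. -/
def Good (K : Set (ProbabilityMeasure X)) : Prop :=
  ∀ A B : Set X, IsClopen A → IsClopen B → (∀ μ ∈ K, μ A < μ B) →
    ∃ C : Set X, IsClopen C ∧ C ⊆ B ∧ ∀ μ ∈ K, μ C = μ A

/-- Approximate divisibility of a set of probability measures. -/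
def ApproximatelyDivisible (K : Set (ProbabilityMeasure X)) : Prop :=
  ∀ A : Set X, IsClopen A → ∀ n : ℕ, 1 ≤ n → ∀ ε : ℝ, 0 < ε →
    ∃ B : Set X, IsClopen B ∧ B ⊆ A ∧
      ∀ μ ∈ K, (μ A : ℝ) - ε ≤ (n : ℝ) * (μ B : ℝ) ∧ (n : ℝ) * (μ B : ℝ) ≤ (μ A : ℝ)

/-- A probability measure has full support if every nonempty open set has positive measure. -/
def FullSupport (μ : ProbabilityMeasure X) : Prop :=
  ∀ U : Set X, IsOpen U → U.Nonempty → 0 < μ U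

/-- A probability measure is atomless if all singletons are null. -/
def Atomless (μ : ProbabilityMeasure X) : Prop :=
  ∀ x : X, μ {x} = 0

/-- Convexity of a set of probability measures (as a subset of the `ℝ≥0`-module of
finite measures). -/
def ProbConvex (K : Set (ProbabilityMeasure X)) : Prop :=
  Convex NNReal (ProbabilityMeasure.toFiniteMeasure '' K)

/-- The set of extreme points of a set of probability measures. -/
def ProbExtremePoints (K : Set (ProbabilityMeasure X)) : Set (ProbabilityMeasure X) :=
  ProbabilityMeasure.toFiniteMeasure ⁻¹'
    (Set.extremePoints NNReal (ProbabilityMeasure.toFiniteMeasure '' K))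

/-- A dynamical simplex: a nonempty compact convex set of atomless, fully supported
probability measures which is good and approximately divisible. -/
def DynamicalSimplex (K : Set (ProbabilityMeasure X)) : Prop :=
  K.Nonempty ∧ IsCompact K ∧ ProbConvex K ∧
    (∀ μ ∈ K, Atomless μ ∧ FullSupport μ) ∧ Good K ∧ ApproximatelyDivisible K

/-- Membership in the full group of `g`. -/
def InFullGroup (g h : X ≃ₜ X) : Prop :=
  ∀ x : X, ∃ n : ℤ, h x = (g.toEquiv ^ n) x

/-- Membership in the topological full group of `g`: `h` is given piecewise by powers of `g`
on a finite clopen partition of `X`. -/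
def InTopologicalFullGroup (g h : X ≃ₜ X) : Prop :=
  ∃ (k : ℕ) (A : Fin k → Set X) (n : Fin k → ℤ),
    (∀ i, IsClopen (A i)) ∧ (∀ x : X, ∃! i, x ∈ A i) ∧
    ∀ i, ∀ x ∈ A i, h x = (g.toEquiv ^ (n i)) x

/-- `g` preserves every measure in `K` (i.e. `g` belongs to the group `G`). -/
def PreservesAll (K : Set (ProbabilityMeasure X)) (g : X ≃ₜ X) : Prop :=
  ∀ μ ∈ K, Preserves g μ

/-- `g` is `K`-saturated: any two `K`-equivalent clopen sets are mapped one to the other by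
an element of the topological full group of `g`. -/
def KSaturated (K : Set (ProbabilityMeasure X)) (g : X ≃ₜ X) : Prop :=
  ∀ U V : Set X, IsClopen U → IsClopen V → (∀ μ ∈ K, μ U = μ V) →
    ∃ h : X ≃ₜ X, InTopologicalFullGroup g h ∧ h '' U = V

/-- The topology of uniform convergence on the homeomorphism group of a compact space
(the compact-open topology, induced from `C(X, X)`). -/
instance : TopologicalSpace (X ≃ₜ X) :=
  TopologicalSpace.induced (fun h : X ≃ₜ X => (h : C(X, X))) inferInstance

/-- A KR-partition for `K`: a finite family of columns, each column being a finite sequence of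
clopen sets which are all `K`-equivalent, the atoms of all columns forming a partition of `X`. -/
structure KRPartition (X : Type*) [TopologicalSpace X] [MeasurableSpace X]
    (K : Set (ProbabilityMeasure X)) where
  numCols : ℕ
  height : Fin numCols → ℕ
  atom : (i : Fin numCols) → Fin (height i + 1) → Set X
  clopen : ∀ i j, IsClopen (atom i j)
  equivK : ∀ i j j', ∀ μ ∈ K, μ (atom i j) = μ (atom i j')
  partition : ∀ x : X, ∃! p : (i : Fin numCols) × Fin (height i + 1), x ∈ atom p.1 p.2

/-- The base of a KR-partition: the union of the first atoms of the columns. -/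
def KRPartition.base {K : Set (ProbabilityMeasure X)} (T : KRPartition X K) : Set X :=
  ⋃ i, T.atom i 0

/-- The top of a KR-partition: the union of the last atoms of the columns. -/
def KRPartition.top {K : Set (ProbabilityMeasure X)} (T : KRPartition X K) : Set X :=
  ⋃ i, T.atom i (Fin.last _)

/-- `S` refines `T`: the base (resp. top) of `S` is contained in the base (resp. top) of `T`,
and every column of `S` is obtained by cutting and stacking columns of `T`. -/
def KRPartition.Refines {K : Set (ProbabilityMeasure X)} (S T : KRPartition X K) : Prop :=
  S.base ⊆ T.base ∧ S.top ⊆ T.top ∧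
  ∀ c : Fin S.numCols, ∃ (m : ℕ) (idx : Fin (m + 1) → Fin T.numCols)
    (piece : (k : Fin (m + 1)) → Fin (T.height (idx k) + 1) → Set X),
    (∀ k j, piece k j ⊆ T.atom (idx k) j) ∧
    (S.height c + 1 = ∑ k : Fin (m + 1), (T.height (idx k) + 1)) ∧
    ∀ (k : Fin (m + 1)) (j : Fin (T.height (idx k) + 1))
      (hlt : (∑ l ∈ Finset.Iio k, (T.height (idx l) + 1)) + (j : ℕ) < S.height c + 1),
      S.atom c ⟨(∑ l ∈ Finset.Iio k, (T.height (idx l) + 1)) + (j : ℕ), hlt⟩ = piece k j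

/-- A KR-partition is compatible with a clopen set `U` if `U` is a union of its atoms,
equivalently every atom is either contained in `U` or disjoint from it. -/
def KRPartition.Compatible {K : Set (ProbabilityMeasure X)} (S : KRPartition X K)
    (U : Set X) : Prop :=
  ∀ i j, S.atom i j ⊆ U ∨ Disjoint (S.atom i j) U

end DynSimplex


/-!
Record the orbit of a minimal `g ∈ G` between consecutive visits to a clopen set by the values of a
locally constant function `c`. This gives a KR-partition `T` such that every homeomorphism `h`
climbing the columns of `T` and returning from its top to its base satisfies `c ∘ h = c ∘ g`, so it
is enough to find a `K`-saturated such `h` in `G`.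

Cut and stack `T` repeatedly. Goodness realizes clopen sets of prescribed measures, and this allows
one to arrange that the base and the top eventually lie on one side of each clopen set, and that,
for each pair of `K`-equivalent clopen sets `U`, `V`, some partition has in each column as many
atoms inside `U` as inside `V`. The closed relations of climbing or returning from the top to the
base shrink to the graph of a homeomorphism `h`. It preserves `K`, since it agrees with the
`K`-equivalences between successive atoms, and it is `K`-saturated, since the atoms inside `U` can
be matched with those inside `V` column by column, by powers of `h`.
-/

namespace DynSimplex

/-! ### Families of columns -/

section Columns

variable {X : Type*}

/-- A column is the list of its atoms, from bottom to top; a tower is recorded as the multiset of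
its columns. A multiset lets cutting and stacking act on columns irrespective of their order. -/
abbrev ColumnFamily (X : Type*) := Multiset (List (Set X))

open scoped Classical in
/-- The number of members of `s` containing `x`: the members of `s` are pairwise disjoint iff it is
at most `1`, and form a partition iff it equals `1`. -/
noncomputable def coverCount (s : Multiset (Set X)) (x : X) : ℕ :=
  s.countP (x ∈ ·)

/-- The atoms of all the columns of a family. -/
def atoms (T : ColumnFamily X) : Multiset (Set X) :=
  T.bind fun L => (L : Multiset (Set X))

/-- The lowest atom of a column, with value `∅` for the empty column. -/
def base (L : List (Set X)) : Set X :=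
  L.getD 0 ∅

/-- The base of a family: the union of the bases of its columns. -/
def bases (T : ColumnFamily X) : Set X :=
  {x | ∃ L ∈ T, x ∈ base L}

/-- The top of a family: the union of the highest atoms of its columns. It is encoded as the base
of the family of reversed columns, which makes every statement on bases dualize to tops. -/
def tops (T : ColumnFamily X) : Set X :=
  bases (T.map List.reverse)

/-- `y` lies in the atom of the column `L` just above an atom containing `x`. -/
def Climbs (L : List (Set X)) (x y : X) : Prop :=
  ∃ (j : ℕ) (h : j + 1 < L.length), x ∈ L[j] ∧ y ∈ L[j + 1]

/-- The constraint `h x = y` imposed by a family on a homeomorphism `h`: climb each column, and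
return from the top to the base. -/
def Link (T : ColumnFamily X) (x y : X) : Prop :=
  (∃ L ∈ T, Climbs L x y) ∨ x ∈ tops T ∧ y ∈ bases T

/-- `L'` is a vertical slice of the column `L`: level by level it is a nonempty subset. -/
def IsPiece (L' L : List (Set X)) : Prop :=
  List.Forall₂ (fun B' B : Set X => B' ⊆ B ∧ B'.Nonempty) L' L

/-- The columns of `F'` are slices of pairwise distinct columns of `F`. -/
def Trims (F' F : ColumnFamily X) : Prop :=
  ∃ F₀ ≤ F, Multiset.Rel IsPiece F' F₀

variable {s t : Multiset (Set X)} {S T F F' : ColumnFamily X} {L L' M N : List (Set X)}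
  {B : Set X} {f : Set X → Set X} {x y : X}

@[simp] lemma coverCount_zero : coverCount 0 x = 0 := by simp [coverCount]

@[simp] lemma coverCount_add : coverCount (s + t) x = coverCount s x + coverCount t x := by
  simp [coverCount]

open scoped Classical in
lemma coverCount_cons : coverCount (B ::ₘ s) x = coverCount s x + if x ∈ B then 1 else 0 := by
  simp [coverCount, Multiset.countP_cons]

open scoped Classical in
lemma coverCount_mono (h : s ≤ t) (x : X) : coverCount s x ≤ coverCount t x :=
  Multiset.countP_le_of_le _ h

open scoped Classical in
lemma coverCount_pos : 0 < coverCount s x ↔ ∃ B ∈ s, x ∈ B :=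
  Multiset.countP_pos

lemma coverCount_map_add_map_sdiff (hf : ∀ B ∈ L, f B ⊆ B) (x : X) :
    coverCount (L.map f : Multiset (Set X)) x +
      coverCount (L.map fun B => B \ f B : Multiset (Set X)) x = coverCount (L : Multiset _) x := by
  induction L with
  | nil => simp
  | cons B L ih =>
    have hB := @hf B (by simp) x
    simp only [List.map_cons, ← Multiset.cons_coe, coverCount_cons,
      ← ih fun B' hB' => hf B' (by simp [hB'])]
    by_cases h₁ : x ∈ f B <;> by_cases h₂ : x ∈ B <;> simp_all <;> omega

@[simp] lemma atoms_zero : atoms (0 : ColumnFamily X) = 0 := rfl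

@[simp] lemma atoms_cons : atoms (L ::ₘ T) = (L : Multiset (Set X)) + atoms T := by simp [atoms]

@[simp] lemma atoms_add : atoms (S + T) = atoms S + atoms T := by simp [atoms]

@[simp] lemma mem_atoms : B ∈ atoms T ↔ ∃ L ∈ T, B ∈ L := by simp [atoms]

lemma coverCount_atoms (T : ColumnFamily X) (x : X) :
    coverCount (atoms T) x = (T.map fun L : List (Set X) => coverCount (L : Multiset _) x).sum := by
  induction T using Multiset.induction_on with
  | empty => simp
  | cons L T ih => simp [ih]

lemma atoms_map_reverse : atoms (T.map List.reverse) = atoms T := by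
  simp [atoms, Multiset.bind_map]

lemma base_mem (h : L ≠ []) : base L ∈ L := by
  cases L with
  | nil => exact absurd rfl h
  | cons B L => simp [base]

lemma base_eq_getElem (h : 0 < L.length) : base L = L[0] := by
  cases L with
  | nil => simp at h
  | cons B L => simp [base]

lemma base_append (h : L ≠ []) : base (L ++ M) = base L := by
  cases L with
  | nil => exact absurd rfl h
  | cons B L => simp [base]

lemma base_append_subset : base (L ++ M) ⊆ base L ∪ base M := by
  cases L with
  | nil => simp
  | cons B L => simp [base]

lemma base_map (h : L ≠ []) : base (L.map f) = f (base L) := by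
  cases L with
  | nil => exact absurd rfl h
  | cons B L => simp [base]

lemma base_map_subset (hf : ∀ B ∈ L, f B ⊆ B) : base (L.map f) ⊆ base L := by
  cases L with
  | nil => simp
  | cons B L => simpa [base] using hf B (by simp)

lemma mem_bases : x ∈ bases T ↔ ∃ L ∈ T, x ∈ base L := Iff.rfl

@[simp] lemma bases_zero : bases (0 : ColumnFamily X) = ∅ := by simp [bases]

@[simp] lemma bases_cons : bases (L ::ₘ T) = base L ∪ bases T := by
  ext; simp [bases]

@[simp] lemma bases_singleton : bases {L} = base L := by
  ext; simp [bases]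

@[simp] lemma bases_add : bases (S + T) = bases S ∪ bases T := by
  ext; simp [bases, or_and_right, exists_or]

@[simp] lemma tops_map_reverse : tops (T.map List.reverse) = bases T := by
  simp [tops, Multiset.map_map]

lemma mem_tops : x ∈ tops T ↔ ∃ L ∈ T, x ∈ base L.reverse := by
  simp [tops, mem_bases]

lemma base_reverse_eq_getElem (h : 0 < L.length) : base L.reverse = L[L.length - 1] := by
  simp [base_eq_getElem (L := L.reverse) (by simpa using h)]

lemma Climbs.of_map (hf : ∀ B ∈ L, f B ⊆ B) (h : Climbs (L.map f) x y) : Climbs L x y := by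
  obtain ⟨j, hj, hx, hy⟩ := h
  simp only [List.length_map, List.getElem_map] at hj hx hy
  exact ⟨j, hj, hf _ (by simp) hx, hf _ (by simp) hy⟩

lemma Climbs.of_append (h : Climbs (L ++ M) x y) :
    Climbs L x y ∨ Climbs M x y ∨ x ∈ base L.reverse ∧ y ∈ base M := by
  obtain ⟨j, hj, hx, hy⟩ := h
  rw [List.length_append] at hj
  rcases lt_trichotomy (j + 1) L.length with h | h | h
  · rw [List.getElem_append_left (by lia)] at hx hy
    exact .inl ⟨j, h, hx, hy⟩
  · rw [List.getElem_append_left (by lia)] at hx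
    rw [List.getElem_append_right h.ge] at hy
    refine .inr (.inr ⟨?_, ?_⟩)
    · simpa [base_reverse_eq_getElem (L := L) (by lia), ← h] using hx
    · simpa [base_eq_getElem (L := M) (by lia), ← h] using hy
  · rw [List.getElem_append_right (by lia)] at hx hy
    refine .inr (.inl ⟨j - L.length, by lia, hx, ?_⟩)
    simpa only [show j + 1 - L.length = j - L.length + 1 by lia] using hy

lemma Climbs.of_reverse (h : Climbs L.reverse x y) : Climbs L y x := by
  obtain ⟨j, hj, hx, hy⟩ := h
  simp only [List.length_reverse, List.getElem_reverse] at hj hx hy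
  refine ⟨L.length - 1 - (j + 1), by lia, hy, ?_⟩
  simpa only [show L.length - 1 - (j + 1) + 1 = L.length - 1 - j by lia] using hx

lemma climbs_reverse : Climbs L.reverse x y ↔ Climbs L y x :=
  ⟨.of_reverse, fun h => .of_reverse (by simpa using h)⟩

lemma link_map_reverse : Link (T.map List.reverse) x y ↔ Link T y x := by
  simp only [Link, Multiset.mem_map, exists_exists_and_eq_and, climbs_reverse, tops_map_reverse,
    and_comm (a := x ∈ bases T)]
  rfl

lemma IsPiece.refl (h : ∀ B ∈ L, B.Nonempty) : IsPiece L L :=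
  List.forall₂_same.2 fun B hB => ⟨subset_rfl, h B hB⟩

lemma IsPiece.trans (h : IsPiece L M) (h' : IsPiece M N) : IsPiece L N := by
  unfold IsPiece at *
  induction h' generalizing L with
  | nil => exact h
  | cons hBC _ ih =>
    cases h with
    | cons hAB h => exact .cons ⟨hAB.1.trans hBC.1, hAB.2⟩ (ih h)

lemma IsPiece.map (hf : ∀ B ∈ L, f B ⊆ B) (hne : ∀ B ∈ L, (f B).Nonempty) :
    IsPiece (L.map f) L :=
  List.forall₂_map_left_iff.2 (List.forall₂_same.2 fun B hB => ⟨hf B hB, hne B hB⟩)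

lemma IsPiece.length_eq (h : IsPiece L' L) : L'.length = L.length :=
  List.Forall₂.length_eq h

lemma IsPiece.getD_subset (h : IsPiece L' L) (i : ℕ) : L'.getD i ∅ ⊆ L.getD i ∅ := by
  unfold IsPiece at h
  induction h generalizing i with
  | nil => rfl
  | cons hB _ ih => cases i with
    | zero => simpa using hB.1
    | succ i => simpa using ih i

lemma Trims.zero : Trims 0 F :=
  ⟨0, zero_le, .zero⟩

lemma Trims.singleton (h : IsPiece L' L) : Trims {L'} {L} :=
  ⟨{L}, le_rfl, .cons h .zero⟩

lemma Trims.add (h : Trims S T) (h' : Trims F' F) : Trims (S + F') (T + F) := by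
  obtain ⟨T₀, hT₀, hS⟩ := h
  obtain ⟨F₀, hF₀, hF'⟩ := h'
  exact ⟨T₀ + F₀, add_le_add hT₀ hF₀, hS.add hF'⟩

lemma Trims.exists_isPiece (h : Trims F' F) (hL : L' ∈ F') : ∃ L ∈ F, IsPiece L' L := by
  obtain ⟨F₀, hF₀, hF'⟩ := h
  obtain ⟨L, hL, hp⟩ := Multiset.exists_mem_of_rel_of_mem hF' hL
  exact ⟨L, Multiset.mem_of_le hF₀ hL, hp⟩

end Columns

/-! ### Cutting and stacking -/

section Refinement

variable {X : Type*} [MeasurableSpace X]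

/-- The relation `A ∼_K B`. -/
def KEquiv (K : Set (ProbabilityMeasure X)) (A B : Set X) : Prop :=
  ∀ μ ∈ K, μ A = μ B

variable {K : Set (ProbabilityMeasure X)} {A B C : Set X}

lemma KEquiv.symm (h : KEquiv K A B) : KEquiv K B A := fun μ hμ => (h μ hμ).symm

lemma KEquiv.trans (h : KEquiv K A B) (h' : KEquiv K B C) : KEquiv K A C :=
  fun μ hμ => (h μ hμ).trans (h' μ hμ)

variable [TopologicalSpace X]

/-- A column for `K`: nonempty clopen sets which are all `K`-equivalent. -/
structure IsColumn (K : Set (ProbabilityMeasure X)) (L : List (Set X)) : Prop where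
  ne_nil : L ≠ []
  isClopen : ∀ B ∈ L, IsClopen B
  nonempty : ∀ B ∈ L, B.Nonempty
  equiv : ∀ B ∈ L, ∀ B' ∈ L, KEquiv K B B'

/-- A family of columns with pairwise disjoint atoms, which need not cover the space. -/
structure IsTower (K : Set (ProbabilityMeasure X)) (T : ColumnFamily X) : Prop where
  isColumn : ∀ L ∈ T, IsColumn K L
  coverCount_le : ∀ x, coverCount (atoms T) x ≤ 1

/-- A family of columns whose atoms partition the space: this is the notion of KR-partition, in the
encoding used for cutting and stacking. -/
structure IsKR (K : Set (ProbabilityMeasure X)) (T : ColumnFamily X) : Prop where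
  isColumn : ∀ L ∈ T, IsColumn K L
  coverCount_eq : ∀ x, coverCount (atoms T) x = 1

/-- `f` cuts the column `L` vertically into the two columns `L.map f` and
`L.map fun B => B \ f B`. -/
structure IsCut (K : Set (ProbabilityMeasure X)) (L : List (Set X)) (f : Set X → Set X) :
    Prop where
  isClopen : ∀ B ∈ L, IsClopen (f B)
  subset : ∀ B ∈ L, f B ⊆ B
  nonempty : ∀ B ∈ L, (f B).Nonempty
  sdiff_nonempty : ∀ B ∈ L, (B \ f B).Nonempty
  equiv : ∀ B ∈ L, ∀ B' ∈ L, KEquiv K (f B) (f B')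

/-- The elementary operations on families of columns: cutting a column in two, and stacking a column
on top of a `K`-equivalent one. -/
inductive CutOrStack (K : Set (ProbabilityMeasure X)) : ColumnFamily X → ColumnFamily X → Prop
  | cut {L : List (Set X)} {f : Set X → Set X} (hf : IsCut K L f) (T : ColumnFamily X) :
      CutOrStack K (L ::ₘ T) (L.map f ::ₘ L.map (fun B => B \ f B) ::ₘ T)
  | stack {L M : List (Set X)} (h : ∀ B ∈ L, ∀ B' ∈ M, KEquiv K B B') (T : ColumnFamily X) :
      CutOrStack K (L ::ₘ M ::ₘ T) ((L ++ M) ::ₘ T)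

/-- `CutAndStack K T S` means that `S` refines `T`: it arises from `T` by finitely many cuts and
stackings. -/
def CutAndStack (K : Set (ProbabilityMeasure X)) (T S : ColumnFamily X) : Prop :=
  Relation.ReflTransGen (CutOrStack K) T S

variable {S T R F S' T' : ColumnFamily X} {L M : List (Set X)} {f : Set X → Set X} {x y : X}

lemma IsColumn.base_mem (h : IsColumn K L) : base L ∈ L :=
  DynSimplex.base_mem h.ne_nil

lemma IsColumn.isClopen_base (h : IsColumn K L) : IsClopen (base L) :=
  h.isClopen _ h.base_mem

lemma IsColumn.base_nonempty (h : IsColumn K L) : (base L).Nonempty :=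
  h.nonempty _ h.base_mem

lemma IsColumn.reverse (h : IsColumn K L) : IsColumn K L.reverse :=
  ⟨by simpa using h.ne_nil, by simpa using h.isClopen, by simpa using h.nonempty,
    by simpa using h.equiv⟩

lemma IsColumn.append (hL : IsColumn K L) (hM : IsColumn K M)
    (h : ∀ B ∈ L, ∀ B' ∈ M, KEquiv K B B') : IsColumn K (L ++ M) where
  ne_nil := by simp [hL.ne_nil]
  isClopen B hB := (List.mem_append.1 hB).elim (hL.isClopen B) (hM.isClopen B)
  nonempty B hB := (List.mem_append.1 hB).elim (hL.nonempty B) (hM.nonempty B)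
  equiv B hB B' hB' := by
    rcases List.mem_append.1 hB with hB | hB <;> rcases List.mem_append.1 hB' with hB' | hB'
    exacts [hL.equiv B hB B' hB', h B hB B' hB', (h B' hB' B hB).symm, hM.equiv B hB B' hB']

lemma IsTower.left (h : IsTower K (S + T)) : IsTower K S :=
  ⟨fun L hL => h.isColumn L (by simp [hL]), fun x => by
    have := h.coverCount_le x
    rw [atoms_add, coverCount_add] at this
    lia⟩

lemma IsTower.right (h : IsTower K (S + T)) : IsTower K T :=
  (add_comm S T ▸ h).left

lemma IsKR.isTower (h : IsKR K T) : IsTower K T :=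
  ⟨h.isColumn, fun x => (h.coverCount_eq x).le⟩

lemma IsKR.reverse (h : IsKR K T) : IsKR K (T.map List.reverse) where
  isColumn := by simpa using fun L hL => (h.isColumn L hL).reverse
  coverCount_eq := by simpa only [atoms_map_reverse] using h.coverCount_eq

lemma IsCut.isPiece (hf : IsCut K L f) : IsPiece (L.map f) L :=
  .map hf.subset hf.nonempty

lemma IsCut.isPiece_sdiff (hf : IsCut K L f) : IsPiece (L.map fun B => B \ f B) L :=
  .map (fun _ _ => Set.sdiff_subset) hf.sdiff_nonempty

lemma IsCut.isColumn (hf : IsCut K L f) (hL : L ≠ []) : IsColumn K (L.map f) :=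
  ⟨by simpa using hL, by simpa using hf.isClopen, by simpa using hf.nonempty, by
    simpa using hf.equiv⟩

lemma IsCut.reverse (hf : IsCut K L f) : IsCut K L.reverse f :=
  ⟨by simpa using hf.isClopen, by simpa using hf.subset, by simpa using hf.nonempty,
    by simpa using hf.sdiff_nonempty, by simpa using hf.equiv⟩

lemma CutOrStack.add_right (h : CutOrStack K T S) (R : ColumnFamily X) :
    CutOrStack K (T + R) (S + R) := by
  cases h with
  | cut hf T => simpa using CutOrStack.cut hf (T + R)
  | stack h T => simpa using CutOrStack.stack h (T + R)

lemma CutOrStack.reverse (h : CutOrStack K T S) :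
    CutOrStack K (T.map List.reverse) (S.map List.reverse) := by
  cases h with
  | cut hf T => simpa using CutOrStack.cut hf.reverse (T.map List.reverse)
  | @stack L M h T =>
    simp only [Multiset.map_cons, List.reverse_append, Multiset.cons_swap L.reverse]
    exact .stack (fun B hB B' hB' => (h B' (by simpa using hB') B (by simpa using hB)).symm) _

lemma CutOrStack.coverCount_atoms (h : CutOrStack K T S) (x : X) :
    coverCount (atoms S) x = coverCount (atoms T) x := by
  cases h with
  | cut hf T =>
    simp only [atoms_cons, coverCount_add, ← coverCount_map_add_map_sdiff hf.subset x, add_assoc]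
  | stack h T => simp only [atoms_cons, coverCount_add, ← Multiset.coe_add, add_assoc]

lemma CutOrStack.exists_subset_of_mem_atoms (h : CutOrStack K T S) (hB : B ∈ atoms S) :
    ∃ B' ∈ atoms T, B ⊆ B' := by
  cases h with
  | @cut L f hf T =>
    simp only [atoms_cons, Multiset.mem_add, Multiset.mem_coe, List.mem_map] at hB
    rcases hB with ⟨C, hC, rfl⟩ | ⟨C, hC, rfl⟩ | hB
    · exact ⟨C, by simp [hC], hf.subset C hC⟩
    · exact ⟨C, by simp [hC], Set.sdiff_subset⟩
    · exact ⟨B, by simp_all, subset_rfl⟩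
  | stack h T => exact ⟨B, by simpa [or_assoc] using hB, subset_rfl⟩

lemma CutOrStack.bases_subset (h : CutOrStack K T S) : bases S ⊆ bases T := by
  cases h with
  | cut hf T =>
    simp only [bases_cons]
    rw [← Set.union_assoc]
    exact Set.union_subset_union_left _ (Set.union_subset (base_map_subset hf.subset)
      (base_map_subset fun B _ => Set.sdiff_subset))
  | stack h T =>
    simp only [bases_cons, ← Set.union_assoc]
    exact Set.union_subset_union_left _ base_append_subset

lemma CutOrStack.tops_subset (h : CutOrStack K T S) : tops S ⊆ tops T :=
  h.reverse.bases_subset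

/-- Stacking only selects one of the passages from the top to the base allowed by `Link T`. -/
lemma CutOrStack.link (h : CutOrStack K T S) (hxy : Link S x y) : Link T x y := by
  rcases hxy with ⟨N, hN, hxy⟩ | ⟨hx, hy⟩
  · cases h with
    | @cut L f hf T =>
      rcases by simpa using hN with rfl | rfl | hN
      · exact .inl ⟨L, by simp, hxy.of_map hf.subset⟩
      · exact .inl ⟨L, by simp, hxy.of_map fun B _ => Set.sdiff_subset⟩
      · exact .inl ⟨N, by simp [hN], hxy⟩
    | @stack L M h T =>
      rcases by simpa using hN with rfl | hN
      · rcases hxy.of_append with hxy | hxy | ⟨hx, hy⟩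
        · exact .inl ⟨L, by simp, hxy⟩
        · exact .inl ⟨M, by simp, hxy⟩
        · exact .inr ⟨mem_tops.2 ⟨L, by simp, hx⟩, M, by simp, hy⟩
      · exact .inl ⟨N, by simp [hN], hxy⟩
  · exact .inr ⟨h.tops_subset hx, h.bases_subset hy⟩

lemma CutOrStack.cutAndStack (h : CutOrStack K T S) : CutAndStack K T S :=
  Relation.ReflTransGen.single h

namespace CutAndStack

lemma refl (T : ColumnFamily X) : CutAndStack K T T := Relation.ReflTransGen.refl

lemma trans (h : CutAndStack K T S) (h' : CutAndStack K S R) : CutAndStack K T R :=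
  Relation.ReflTransGen.trans h h'

lemma add_right (h : CutAndStack K T S) (R : ColumnFamily X) : CutAndStack K (T + R) (S + R) :=
  Relation.ReflTransGen.lift (· + R) (fun _ _ h => h.add_right R) _ _ h

lemma add (h : CutAndStack K T S) (h' : CutAndStack K T' S') :
    CutAndStack K (T + T') (S + S') := by
  refine (h.add_right T').trans ?_
  rw [add_comm S T', add_comm S S']
  exact h'.add_right S

lemma cons (h : CutAndStack K T S) (L : List (Set X)) : CutAndStack K (L ::ₘ T) (L ::ₘ S) := by
  simpa using (refl {L}).add h

lemma reverse (h : CutAndStack K T S) :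
    CutAndStack K (T.map List.reverse) (S.map List.reverse) :=
  Relation.ReflTransGen.lift (Multiset.map List.reverse) (fun _ _ h => h.reverse) _ _ h

lemma coverCount_atoms (h : CutAndStack K T S) (x : X) :
    coverCount (atoms S) x = coverCount (atoms T) x := by
  induction h with
  | refl => rfl
  | tail _ h ih => rw [h.coverCount_atoms, ih]

lemma exists_subset_of_mem_atoms (h : CutAndStack K T S) (hB : B ∈ atoms S) :
    ∃ B' ∈ atoms T, B ⊆ B' := by
  induction h generalizing B with
  | refl => exact ⟨B, hB, subset_rfl⟩
  | tail _ h ih =>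
    obtain ⟨C, hC, hBC⟩ := h.exists_subset_of_mem_atoms hB
    obtain ⟨D, hD, hCD⟩ := ih hC
    exact ⟨D, hD, hBC.trans hCD⟩

lemma bases_subset (h : CutAndStack K T S) : bases S ⊆ bases T := by
  induction h with
  | refl => rfl
  | tail _ h ih => exact h.bases_subset.trans ih

lemma tops_subset (h : CutAndStack K T S) : tops S ⊆ tops T :=
  h.reverse.bases_subset

lemma link (h : CutAndStack K T S) (hxy : Link S x y) : Link T x y := by
  induction h with
  | refl => exact hxy
  | tail _ h ih => exact ih (h.link hxy)

end CutAndStack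

lemma map_base_le_atoms (hF : ∀ L ∈ F, IsColumn K L) : F.map base ≤ atoms F := by
  induction F using Multiset.induction_on with
  | empty => simp
  | cons L F ih =>
    rw [Multiset.map_cons, atoms_cons, ← Multiset.singleton_add]
    refine add_le_add ?_ (ih fun N hN => hF N (by simp [hN]))
    simpa using (hF L (by simp)).base_mem

lemma isClopen_bases (hF : ∀ L ∈ F, IsColumn K L) : IsClopen (bases F) := by
  induction F using Multiset.induction_on with
  | empty => simp [isClopen_empty]
  | cons L F ih =>
    simpa using (hF L (by simp)).isClopen_base.union (ih fun N hN => hF N (by simp [hN]))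

/-! ### Measures of clopen sets -/

variable [OpensMeasurableSpace X]

lemma measure_add_measure_sdiff (hC : IsClopen C) (h : C ⊆ B) (μ : ProbabilityMeasure X) :
    μ C + μ (B \ C) = μ B := by
  have := measure_inter_add_sdiff (μ := (μ : Measure X)) B hC.2.measurableSet
  rw [Set.inter_eq_right.2 h] at this
  rw [← ENNReal.coe_inj]
  push_cast
  simpa using this

lemma sum_measure_eq_measure_of_coverCount_le {s : Multiset (Set X)} (hs : ∀ B ∈ s, IsClopen B)
    (hc : ∀ x, coverCount s x ≤ 1) (μ : ProbabilityMeasure X) :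
    (s.map fun B => μ B).sum = μ {x | ∃ B ∈ s, x ∈ B} := by
  classical
  induction s using Multiset.induction_on with
  | empty => simp
  | cons B s ih =>
    have hdiff : {x | ∃ B' ∈ s, x ∈ B'} = {x | ∃ B' ∈ B ::ₘ s, x ∈ B'} \ B := by
      ext x
      have hx := hc x
      rw [coverCount_cons] at hx
      have hpos := coverCount_pos (s := s) (x := x)
      by_cases hxB : x ∈ B
      · simp_all
      · simp [hxB]
    rw [Multiset.map_cons, Multiset.sum_cons, ih (fun B' hB' => hs B' (by simp [hB']))
      fun x => (coverCount_mono (Multiset.le_cons_self s B) x).trans (hc x), hdiff]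
    exact measure_add_measure_sdiff (hs B (by simp)) (fun x hx => (⟨B, by simp, hx⟩ : ∃ _, _)) μ

lemma IsCut.compl (hf : IsCut K L f) (hL : IsColumn K L) : IsCut K L fun B => B \ f B where
  isClopen B hB := (hL.isClopen B hB).diff (hf.isClopen B hB)
  subset _ _ := Set.sdiff_subset
  nonempty := hf.sdiff_nonempty
  sdiff_nonempty B hB := by
    simpa [Set.inter_eq_right.2 (hf.subset B hB)] using hf.nonempty B hB
  equiv B hB B' hB' μ hμ := by
    refine add_left_cancel (a := μ (f B)) ?_
    rw [measure_add_measure_sdiff (hf.isClopen B hB) (hf.subset B hB), hf.equiv B hB B' hB' μ hμ,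
      measure_add_measure_sdiff (hf.isClopen B' hB') (hf.subset B' hB'),
      hL.equiv B hB B' hB' μ hμ]

lemma CutOrStack.isColumn (h : CutOrStack K T S) (hT : ∀ L ∈ T, IsColumn K L) :
    ∀ L ∈ S, IsColumn K L := by
  intro N hN
  cases h with
  | @cut L f hf T =>
    have hL := hT L (by simp)
    rcases by simpa using hN with rfl | rfl | hN
    exacts [hf.isColumn hL.ne_nil, (hf.compl hL).isColumn hL.ne_nil, hT N (by simp [hN])]
  | @stack L M h T =>
    rcases by simpa using hN with rfl | hN
    exacts [(hT L (by simp)).append (hT M (by simp)) h, hT N (by simp [hN])]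

lemma CutAndStack.isColumn (h : CutAndStack K T S) (hT : ∀ L ∈ T, IsColumn K L) :
    ∀ L ∈ S, IsColumn K L := by
  induction h with
  | refl => exact hT
  | tail _ h ih => exact h.isColumn ih

lemma IsTower.cutAndStack (hT : IsTower K T) (h : CutAndStack K T S) : IsTower K S :=
  ⟨h.isColumn hT.isColumn, fun x => (h.coverCount_atoms x).trans_le (hT.coverCount_le x)⟩

lemma IsKR.cutAndStack (hT : IsKR K T) (h : CutAndStack K T S) : IsKR K S :=
  ⟨h.isColumn hT.isColumn, fun x => (h.coverCount_atoms x).trans (hT.coverCount_eq x)⟩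

lemma IsTower.sum_measure_base (hF : IsTower K F) (μ : ProbabilityMeasure X) :
    (F.map fun L => μ (base L)).sum = μ (bases F) := by
  have := sum_measure_eq_measure_of_coverCount_le (s := F.map base)
    (by simpa using fun L hL => (hF.isColumn L hL).isClopen_base)
    (fun x => (coverCount_mono (map_base_le_atoms hF.isColumn) x).trans (hF.coverCount_le x)) μ
  simpa [Multiset.map_map, bases] using this

end Refinement

/-! ### Splitting and stacking columns -/

section Stacking

/-- `B` lies on one side of `U`. -/
def Decides {X : Type*} (B U : Set X) : Prop :=
  B ⊆ U ∨ Disjoint B U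

/-- Every atom of `T` lies on one side of `U`, i.e. `T` is compatible with `U`. -/
def Compat {X : Type*} (T : ColumnFamily X) (U : Set X) : Prop :=
  ∀ B ∈ atoms T, Decides B U

lemma Decides.mono {X : Type*} {B B' U : Set X} (h : Decides B U) (hB : B' ⊆ B) : Decides B' U :=
  h.imp hB.trans (Disjoint.mono_left hB)

lemma Decides.mem_iff {X : Type*} {B U : Set X} {x y : X} (h : Decides B U) (hx : x ∈ B)
    (hy : y ∈ B) : x ∈ U ↔ y ∈ U :=
  h.elim (fun h => by simp [h hx, h hy])
    fun h => by simp [Set.disjoint_left.1 h hx, Set.disjoint_left.1 h hy]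

variable {X : Type*} [TopologicalSpace X] [MeasurableSpace X]

/-- A nonempty good set of probability measures with full support. -/
structure GoodFamily (K : Set (ProbabilityMeasure X)) : Prop where
  nonempty : K.Nonempty
  fullSupport : ∀ μ ∈ K, FullSupport μ
  good : Good K

/-- The columns `T` are cut, according to whether their `n`-th atom lies in `C` or off `C`, into the
families `F₁` and `F₂`. -/
structure IsSplit (K : Set (ProbabilityMeasure X)) (T : ColumnFamily X) (C : Set X) (n : ℕ)
    (F₁ F₂ : ColumnFamily X) : Prop where
  cutAndStack : CutAndStack K T (F₁ + F₂)
  bases_eq : bases (F₁ + F₂) = bases T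
  trims_left : Trims F₁ T
  trims_right : Trims F₂ T
  subset : ∀ L ∈ F₁, L.getD n ∅ ⊆ C
  disjoint : ∀ L ∈ F₂, Disjoint (L.getD n ∅) C

variable {K : Set (ProbabilityMeasure X)} {S T F H T' F₁ F₂ F₁' F₂' : ColumnFamily X}
  {L M : List (Set X)} {B C U : Set X} {f : Set X → Set X} {n : ℕ} {μ : ProbabilityMeasure X}

lemma GoodFamily.measure_pos (hK : GoodFamily K) (hμ : μ ∈ K) (hB : IsClopen B)
    (hne : B.Nonempty) : 0 < μ B :=
  hK.fullSupport μ hμ B hB.2 hne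

lemma GoodFamily.nonempty_of_equiv (hK : GoodFamily K) (hB : IsClopen B) (hne : B.Nonempty)
    (h : KEquiv K B C) : C.Nonempty := by
  obtain ⟨ν, hν⟩ := hK.nonempty
  rw [Set.nonempty_iff_ne_empty]
  rintro rfl
  exact (hK.measure_pos hν hB hne).ne' (by simpa using h ν hν)

lemma IsSplit.add (h : IsSplit K T C n F₁ F₂) (h' : IsSplit K T' C n F₁' F₂') :
    IsSplit K (T + T') C n (F₁ + F₁') (F₂ + F₂') where
  cutAndStack := by simpa only [add_add_add_comm] using h.cutAndStack.add h'.cutAndStack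
  bases_eq := by
    rw [add_add_add_comm, bases_add, h.bases_eq, h'.bases_eq, bases_add]
  trims_left := h.trims_left.add h'.trims_left
  trims_right := h.trims_right.add h'.trims_right
  subset L hL := (Multiset.mem_add.1 hL).elim (h.subset L) (h'.subset L)
  disjoint L hL := (Multiset.mem_add.1 hL).elim (h.disjoint L) (h'.disjoint L)

lemma IsSplit.bases_left (h : IsSplit K T C 0 F₁ F₂) : bases F₁ = bases T ∩ C := by
  have h₁ : bases F₁ ⊆ C := fun x ⟨L, hL, hx⟩ => h.subset L hL hx
  have h₂ : Disjoint (bases F₂) C :=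
    Set.disjoint_left.2 fun x ⟨L, hL, hx⟩ => Set.disjoint_left.1 (h.disjoint L hL) hx
  rw [← h.bases_eq, bases_add, Set.union_inter_distrib_right, Set.inter_eq_left.2 h₁,
    h₂.inter_eq, Set.union_empty]

lemma exists_cutAndStack_forall {P : List (Set X) → Prop}
    (h : ∀ L ∈ T, ∃ S, CutAndStack K {L} S ∧ ∀ L' ∈ S, P L') :
    ∃ S, CutAndStack K T S ∧ ∀ L' ∈ S, P L' := by
  induction T using Multiset.induction_on with
  | empty => exact ⟨0, .refl 0, by simp⟩
  | cons L T ih =>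
    obtain ⟨S, hS, hPS⟩ := h L (by simp)
    obtain ⟨R, hR, hPR⟩ := ih fun M hM => h M (by simp [hM])
    exact ⟨S + R, by simpa using hS.add hR,
      fun L' hL' => (Multiset.mem_add.1 hL').elim (hPS L') (hPR L')⟩

lemma exists_isCut_of_measure_lt (hK : GoodFamily K) (hL : IsColumn K L) (hC : IsClopen C)
    (hne : C.Nonempty) (hlt : ∀ μ ∈ K, μ C < μ (base L)) :
    ∃ f, IsCut K L f ∧ (∀ B ∈ L, KEquiv K (f B) C) ∧ ∀ B ∈ L, C ⊆ B → f B = C := by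
  classical
  have hltB : ∀ B ∈ L, ∀ μ ∈ K, μ C < μ B := fun B hB μ hμ =>
    (hlt μ hμ).trans_eq (hL.equiv _ hL.base_mem B hB μ hμ)
  have h : ∀ B : Set X, ∃ D : Set X, B ∈ L →
      IsClopen D ∧ D ⊆ B ∧ KEquiv K D C ∧ (C ⊆ B → D = C) := by
    intro B
    by_cases hB : B ∈ L
    · by_cases hCB : C ⊆ B
      · exact ⟨C, fun _ => ⟨hC, hCB, fun _ _ => rfl, fun _ => rfl⟩⟩
      · obtain ⟨D, hD, hDB, hDC⟩ := hK.good C B hC (hL.isClopen B hB) (hltB B hB)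
        exact ⟨D, fun _ => ⟨hD, hDB, hDC, fun h => absurd h hCB⟩⟩
    · exact ⟨∅, fun h => absurd h hB⟩
  choose f hf using h
  have hequiv : ∀ B ∈ L, KEquiv K (f B) C := fun B hB => (hf B hB).2.2.1
  refine ⟨f, ⟨fun B hB => (hf B hB).1, fun B hB => (hf B hB).2.1,
    fun B hB => hK.nonempty_of_equiv hC hne (hequiv B hB).symm, fun B hB => ?_,
    fun B hB B' hB' => (hequiv B hB).trans (hequiv B' hB').symm⟩, hequiv,
    fun B hB => (hf B hB).2.2.2⟩
  obtain ⟨ν, hν⟩ := hK.nonempty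
  rw [Set.nonempty_iff_ne_empty, Ne, Set.sdiff_eq_empty]
  intro hBf
  exact (hltB B hB ν hν).not_ge ((ν.apply_mono hBf).trans_eq (hequiv B hB ν hν))

variable [OpensMeasurableSpace X]

lemma exists_isCut_of_not_decides (hK : GoodFamily K) (hL : IsColumn K L) (hC : IsClopen C)
    (hB : B ∈ L) (h : ¬ Decides B C) : ∃ f, IsCut K L f ∧ f B = B ∩ C := by
  rw [Decides, not_or, Set.not_disjoint_iff_nonempty_inter] at h
  have hBC : IsClopen (B ∩ C) := (hL.isClopen B hB).inter hC
  have hdiff : (B \ (B ∩ C)).Nonempty := by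
    rw [Set.sdiff_self_inter]
    exact Set.nonempty_of_not_subset h.1
  obtain ⟨f, hf, -, hfC⟩ := exists_isCut_of_measure_lt hK hL hBC h.2 fun μ hμ => by
    rw [hL.equiv _ hL.base_mem B hB μ hμ, ← measure_add_measure_sdiff hBC Set.inter_subset_left]
    exact lt_add_of_pos_right _ (hK.measure_pos hμ ((hL.isClopen B hB).diff hBC) hdiff)
  exact ⟨f, hf, hfC B hB Set.inter_subset_left⟩

lemma exists_isSplit_singleton (hK : GoodFamily K) (hL : IsColumn K L) (hC : IsClopen C) (n : ℕ) :
    ∃ F₁ F₂, IsSplit K {L} C n F₁ F₂ := by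
  have hrefl : Trims {L} {L} := .singleton (.refl hL.nonempty)
  by_cases h : Decides (L.getD n ∅) C
  · rcases h with h | h
    · exact ⟨{L}, 0, .refl _, by simp, hrefl, .zero, by simpa using h, by simp⟩
    · exact ⟨0, {L}, .refl _, by simp, .zero, hrefl, by simp, by simpa using h⟩
  have hn : n < L.length := by
    by_contra! hn
    exact h (.inl (by simp [List.getElem?_eq_none hn]))
  rw [List.getD_eq_getElem _ _ hn] at h
  obtain ⟨f, hf, hfC⟩ := exists_isCut_of_not_decides hK hL hC (by simp) h
  refine ⟨{L.map f}, {L.map fun B => B \ f B}, (CutOrStack.cut hf 0).cutAndStack, ?_,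
    .singleton hf.isPiece, .singleton hf.isPiece_sdiff, ?_, ?_⟩
  · simp [base_map hL.ne_nil, Set.union_sdiff_cancel (hf.subset _ hL.base_mem)]
  · simp [hn, hfC]
  · simpa [hn, hfC] using Set.disjoint_sdiff_left

lemma exists_isSplit (hK : GoodFamily K) (hT : ∀ L ∈ T, IsColumn K L) (hC : IsClopen C) (n : ℕ) :
    ∃ F₁ F₂, IsSplit K T C n F₁ F₂ := by
  induction T using Multiset.induction_on with
  | empty => exact ⟨0, 0, .refl _, rfl, .zero, .zero, by simp, by simp⟩
  | cons L T ih =>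
    obtain ⟨F₁, F₂, h⟩ := ih fun M hM => hT M (by simp [hM])
    obtain ⟨G₁, G₂, h'⟩ := exists_isSplit_singleton hK (hT L (by simp)) hC n
    exact ⟨G₁ + F₁, G₂ + F₂, h'.add h⟩

lemma exists_compat_column (hK : GoodFamily K) (hL : IsColumn K L) (hU : IsClopen U) (n : ℕ) :
    ∃ S, CutAndStack K {L} S ∧ ∀ L' ∈ S, IsPiece L' L ∧ ∀ i < n, Decides (L'.getD i ∅) U := by
  induction n with
  | zero => exact ⟨{L}, .refl _, by simpa using IsPiece.refl hL.nonempty⟩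
  | succ n ih =>
    obtain ⟨S, hS, hSn⟩ := ih
    have hSL := hS.isColumn (by simpa using hL)
    have hstep : ∀ M ∈ S, ∃ R, CutAndStack K {M} R ∧
        ∀ L' ∈ R, IsPiece L' L ∧ ∀ i < n + 1, Decides (L'.getD i ∅) U := by
      intro M hM
      obtain ⟨F₁, F₂, h⟩ := exists_isSplit_singleton hK (hSL M hM) hU n
      refine ⟨F₁ + F₂, h.cutAndStack, fun L' hL' => ?_⟩
      have hpiece : IsPiece L' M := by
        rcases Multiset.mem_add.1 hL' with hL' | hL'
        · simpa using h.trims_left.exists_isPiece hL'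
        · simpa using h.trims_right.exists_isPiece hL'
      refine ⟨hpiece.trans (hSn M hM).1, fun i hi => ?_⟩
      rcases Nat.lt_succ_iff_lt_or_eq.1 hi with hi | rfl
      · exact ((hSn M hM).2 i hi).mono (hpiece.getD_subset i)
      · exact (Multiset.mem_add.1 hL').imp (h.subset L') (h.disjoint L')
    obtain ⟨R, hR, hRn⟩ := exists_cutAndStack_forall hstep
    exact ⟨R, hS.trans hR, hRn⟩

omit [OpensMeasurableSpace X] in
lemma Compat.cutAndStack (h : Compat T U) (hS : CutAndStack K T S) : Compat S U := by
  intro B hB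
  obtain ⟨B', hB', hBB'⟩ := hS.exists_subset_of_mem_atoms hB
  exact (h B' hB').mono hBB'

lemma exists_compat (hK : GoodFamily K) (hT : ∀ L ∈ T, IsColumn K L) (hU : IsClopen U) :
    ∃ S, CutAndStack K T S ∧ Compat S U := by
  have hcol : ∀ L ∈ T, ∃ S, CutAndStack K {L} S ∧ ∀ L' ∈ S, ∀ B ∈ L', Decides B U := by
    intro L hL
    obtain ⟨S, hS, h⟩ := exists_compat_column hK (hT L hL) hU L.length
    refine ⟨S, hS, fun L' hL' B hB => ?_⟩
    obtain ⟨i, hi, rfl⟩ := List.getElem_of_mem hB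
    simpa [hi] using (h L' hL').2 i (hi.trans_eq (h L' hL').1.length_eq)
  obtain ⟨S, hS, h⟩ := exists_cutAndStack_forall hcol
  exact ⟨S, hS, by simpa [Compat] using fun B L hL hB => h L hL B hB⟩

lemma exists_compat_finset (hK : GoodFamily K) (hT : ∀ L ∈ T, IsColumn K L)
    {𝒰 : Finset (Set X)} (h𝒰 : ∀ U ∈ 𝒰, IsClopen U) :
    ∃ S, CutAndStack K T S ∧ ∀ U ∈ 𝒰, Compat S U := by
  classical
  induction 𝒰 using Finset.induction_on with
  | empty => exact ⟨T, .refl _, by simp⟩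
  | insert U 𝒰 _ ih =>
    obtain ⟨S, hS, hc⟩ := ih fun V hV => h𝒰 V (by simp [hV])
    obtain ⟨R, hR, hcU⟩ := exists_compat hK (hS.isColumn hT) (h𝒰 U (by simp))
    exact ⟨R, hS.trans hR, by simpa using ⟨hcU, fun V hV => (hc V hV).cutAndStack hR⟩⟩

end Stacking

section Concentrating

variable {X : Type*} [TopologicalSpace X] [MeasurableSpace X] [OpensMeasurableSpace X]
  {K : Set (ProbabilityMeasure X)} {F H T : ColumnFamily X} {L M : List (Set X)} {U W : Set X}

lemma exists_stack_pieces (hK : GoodFamily K) (hM : IsColumn K M) (hF : ∀ L ∈ F, IsColumn K L)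
    (hF₀ : F ≠ 0) (hsum : ∀ μ ∈ K, μ (base M) = (F.map fun L => μ (base L)).sum) :
    ∃ S, CutAndStack K (M ::ₘ F) S ∧ bases S = bases F ∧
      ∀ L' ∈ S, ∃ L ∈ F, ∃ M', IsPiece M' M ∧ L' = L ++ M' := by
  induction F using Multiset.induction_on generalizing M with
  | empty => exact absurd rfl hF₀
  | cons L F ih =>
    have hL := hF L (by simp)
    have hF' : ∀ N ∈ F, IsColumn K N := fun N hN => hF N (by simp [hN])
    rcases eq_or_ne F 0 with rfl | hF₀
    · have hLM : ∀ B ∈ L, ∀ B' ∈ M, KEquiv K B B' := fun B hB B' hB' =>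
        ((hL.equiv B hB _ hL.base_mem).trans fun μ hμ => by simpa using (hsum μ hμ).symm).trans
          (hM.equiv _ hM.base_mem B' hB')
      refine ⟨{L ++ M}, ?_, by simp [base_append hL.ne_nil], ?_⟩
      · rw [Multiset.cons_swap]
        exact (CutOrStack.stack hLM 0).cutAndStack
      · simpa using IsPiece.refl hM.nonempty
    have hlt : ∀ μ ∈ K, μ (base L) < μ (base M) := by
      intro μ hμ
      obtain ⟨N, hN⟩ := Multiset.exists_mem_of_ne_zero hF₀
      have hNpos := hK.measure_pos hμ (hF' N hN).isClopen_base (hF' N hN).base_nonempty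
      rw [hsum μ hμ, Multiset.map_cons, Multiset.sum_cons]
      exact lt_add_of_pos_right _ (hNpos.trans_le (Multiset.single_le_sum (by simp) _
        (Multiset.mem_map_of_mem (fun L => μ (base L)) hN)))
    obtain ⟨f, hf, hfL, -⟩ := exists_isCut_of_measure_lt hK hM hL.isClopen_base hL.base_nonempty hlt
    have hstack : ∀ B ∈ L, ∀ B' ∈ M.map f, KEquiv K B B' := by
      simpa using fun B hB D hD => (hL.equiv B hB _ hL.base_mem).trans (hfL D hD).symm
    obtain ⟨S, hS, hSF, hSp⟩ := ih ((hf.compl hM).isColumn hM.ne_nil) hF' hF₀ fun μ hμ => by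
      have h := measure_add_measure_sdiff (hf.isClopen _ hM.base_mem) (hf.subset _ hM.base_mem) μ
      rw [hsum μ hμ, hfL _ hM.base_mem μ hμ, Multiset.map_cons, Multiset.sum_cons] at h
      simpa only [base_map hM.ne_nil] using add_left_cancel h
    refine ⟨(L ++ M.map f) ::ₘ S, ?_, by simp [hSF, base_append hL.ne_nil], ?_⟩
    · refine (CutOrStack.cut hf _).cutAndStack.trans (.trans ?_ (hS.cons _))
      rw [Multiset.cons_swap _ L, Multiset.cons_swap _ L]
      exact (CutOrStack.stack hstack _).cutAndStack
    · intro L' hL'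
      rcases Multiset.mem_cons.1 hL' with rfl | hL'
      · exact ⟨L, by simp, M.map f, hf.isPiece, rfl⟩
      · obtain ⟨N, hN, M', hM', rfl⟩ := hSp L' hL'
        exact ⟨N, by simp [hN], M', hM'.trans hf.isPiece_sdiff, rfl⟩

/-- Goodness provides, inside the base of `F`, a clopen set equivalent to the base of `M`: it is the
base of the part of `F` on which `M` gets stacked, the rest of `F` being trimmed to `F₂`. -/
lemma exists_stack_of_measure_le (hK : GoodFamily K) (hM : IsColumn K M) (hF : IsTower K F)
    (hle : KEquiv K (base M) (bases F) ∨ ∀ μ ∈ K, μ (base M) < μ (bases F)) :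
    ∃ S F₂, CutAndStack K (M ::ₘ F) (S + F₂) ∧ bases (S + F₂) = bases F ∧
      (∀ L' ∈ S, ∃ L ∈ F, ∃ L₁ M', IsPiece L₁ L ∧ IsPiece M' M ∧ L' = L₁ ++ M') ∧
      Trims F₂ F := by
  obtain ⟨C, hC, hCF, hMC⟩ : ∃ C, IsClopen C ∧ C ⊆ bases F ∧ KEquiv K (base M) C := by
    rcases hle with h | h
    · exact ⟨bases F, isClopen_bases hF.isColumn, subset_rfl, h⟩
    · obtain ⟨C, hC, hCF, hCM⟩ := hK.good _ _ hM.isClopen_base (isClopen_bases hF.isColumn) h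
      exact ⟨C, hC, hCF, KEquiv.symm hCM⟩
  obtain ⟨F₁, F₂, h⟩ := exists_isSplit hK hF.isColumn hC 0
  have hF₁ : IsTower K F₁ := (hF.cutAndStack h.cutAndStack).left
  have hF₁C : bases F₁ = C := h.bases_left.trans (Set.inter_eq_right.2 hCF)
  have hF₁₀ : F₁ ≠ 0 := by
    rintro rfl
    simpa [← hF₁C] using hK.nonempty_of_equiv hM.isClopen_base hM.base_nonempty hMC
  obtain ⟨S, hS, hSF, hSp⟩ := exists_stack_pieces hK hM hF₁.isColumn hF₁₀ fun μ hμ => by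
    rw [hF₁.sum_measure_base, hF₁C, hMC μ hμ]
  refine ⟨S, F₂, (h.cutAndStack.cons M).trans (by simpa using hS.add (.refl F₂)), ?_, ?_,
    h.trims_right⟩
  · rw [bases_add, hSF, ← bases_add, h.bases_eq]
  · intro L' hL'
    obtain ⟨L₁, hL₁, M', hM', rfl⟩ := hSp L' hL'
    obtain ⟨L, hL, hp⟩ := h.trims_left.exists_isPiece hL₁
    exact ⟨L, hL, L₁, M', hp, hM', rfl⟩

lemma exists_stack_all (hK : GoodFamily K) (hT : IsTower K (F + H))
    (hlt : ∀ M ∈ H, ∀ μ ∈ K, μ (base M) < μ (bases F)) :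
    ∃ S, CutAndStack K (F + H) S ∧ bases S = bases F := by
  induction H using Multiset.induction_on generalizing F with
  | empty => exact ⟨F, by simpa using .refl F, rfl⟩
  | cons M H ih =>
    obtain ⟨S, F₂, hS, hb, -⟩ := exists_stack_of_measure_le hK (hT.isColumn M (by simp)) hT.left
      (.inr (hlt M (by simp)))
    have hR : CutAndStack K (F + M ::ₘ H) (S + F₂ + H) := by
      simpa using hS.add (.refl H)
    obtain ⟨R, hSR, hRb⟩ := ih (hT.cutAndStack hR) (by
      simpa only [hb] using fun N hN => hlt N (by simp [hN]))
    exact ⟨R, hR.trans hSR, hRb.trans hb⟩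

end Concentrating

section Compactness

variable {X : Type*} [TopologicalSpace X] [MeasurableSpace X]

/-- A compact good family of atomless measures. -/
structure CompactGoodFamily [OpensMeasurableSpace X] (K : Set (ProbabilityMeasure X)) : Prop
    extends GoodFamily K where
  isCompact : IsCompact K
  atomless : ∀ μ ∈ K, Atomless μ

variable [CompactSpace X] [TopologicalSpace.MetrizableSpace X] [TotallyDisconnectedSpace X]
  [BorelSpace X] {K : Set (ProbabilityMeasure X)} {H T : ColumnFamily X} {L L₀ : List (Set X)}
  {U W : Set X}

omit [CompactSpace X] [TotallyDisconnectedSpace X] in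
lemma continuous_measure_of_isClopen (hU : IsClopen U) :
    Continuous fun μ : ProbabilityMeasure X => μ U :=
  continuous_iff_continuousAt.2 fun _ =>
    ProbabilityMeasure.tendsto_measure_of_null_frontier_of_tendsto Filter.tendsto_id
      (by simp [hU.frontier_eq])

lemma exists_isClopen_measure_lt {μ : ProbabilityMeasure X} {x : X} {r : NNReal}
    (h : μ {x} < r) : ∃ U, (IsClopen U ∧ x ∈ U) ∧ μ U < r := by
  have h' : (μ : Measure X) {x} < r := by
    rwa [← ProbabilityMeasure.ennreal_coeFn_eq_coeFn_toMeasure, ENNReal.coe_lt_coe]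
  obtain ⟨O, hxO, hO, hOr⟩ := Set.exists_isOpen_lt_of_lt _ _ h'
  obtain ⟨U, hU, hxU, hUO⟩ := compact_exists_isClopen_in_isOpen hO (hxO rfl)
  refine ⟨U, ⟨hU, hxU⟩, ?_⟩
  have hUr := (measure_mono hUO).trans_lt hOr
  rwa [← ProbabilityMeasure.ennreal_coeFn_eq_coeFn_toMeasure, ENNReal.coe_lt_coe] at hUr

lemma exists_isClopen_forall_measure_lt (hK : IsCompact K) (hW : IsClopen W) {x : X}
    (h : ∀ μ ∈ K, μ {x} < μ W) : ∃ U, (IsClopen U ∧ x ∈ U) ∧ ∀ μ ∈ K, μ U < μ W := by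
  obtain ⟨⟨U, hU⟩, hUK⟩ := hK.elim_directed_cover
    (fun U : {U : Set X // IsClopen U ∧ x ∈ U} => {μ : ProbabilityMeasure X | μ U.1 < μ W})
    (hι := ⟨⟨Set.univ, isClopen_univ, trivial⟩⟩)
    (fun U => isOpen_lt (continuous_measure_of_isClopen U.2.1) (continuous_measure_of_isClopen hW))
    (fun μ hμ => by
      obtain ⟨U, hU, hUW⟩ := exists_isClopen_measure_lt (h μ hμ)
      exact Set.mem_iUnion.2 ⟨⟨U, hU⟩, hUW⟩)
    (fun U V => ⟨⟨U.1 ∩ V.1, U.2.1.inter V.2.1, U.2.2, V.2.2⟩,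
      fun μ hμ => (μ.apply_mono Set.inter_subset_left).trans_lt hμ,
      fun μ hμ => (μ.apply_mono Set.inter_subset_right).trans_lt hμ⟩)
  exact ⟨U, hU, hUK⟩

lemma exists_finset_forall_decides_measure_lt (hK : CompactGoodFamily K) (hW : IsClopen W)
    (hne : W.Nonempty) :
    ∃ 𝒰 : Finset (Set X), (∀ U ∈ 𝒰, IsClopen U) ∧
      ∀ B : Set X, B.Nonempty → (∀ U ∈ 𝒰, Decides B U) → ∀ μ ∈ K, μ B < μ W := by
  classical
  have hsmall : ∀ x : X, ∃ U, (IsClopen U ∧ x ∈ U) ∧ ∀ μ ∈ K, μ U < μ W := fun x =>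
    exists_isClopen_forall_measure_lt hK.isCompact hW fun μ hμ => by
      rw [hK.atomless μ hμ x]
      exact hK.measure_pos hμ hW hne
  choose U hU hUW using hsmall
  obtain ⟨t, ht⟩ := isCompact_univ.elim_finite_subcover U (fun x => (hU x).1.2)
    fun x _ => Set.mem_iUnion.2 ⟨x, (hU x).2⟩
  refine ⟨t.image U, by simpa using fun x _ => (hU x).1, ?_⟩
  rintro B ⟨y, hy⟩ hB μ hμ
  obtain ⟨x, hx, hyx⟩ := Set.mem_iUnion₂.1 (ht (Set.mem_univ y))
  rcases hB (U x) (Finset.mem_image_of_mem _ hx) with h | h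
  · exact (μ.apply_mono h).trans_lt (hUW x μ hμ)
  · exact absurd hyx (Set.disjoint_left.1 h hy)

lemma CompactGoodFamily.exists_isCut (hK : CompactGoodFamily K) (hL : IsColumn K L) :
    ∃ f, IsCut K L f := by
  obtain ⟨x, hx⟩ := hL.base_nonempty
  obtain ⟨U, ⟨hU, hxU⟩, hlt⟩ := exists_isClopen_forall_measure_lt hK.isCompact hL.isClopen_base
    fun μ hμ => by
      rw [hK.atomless μ hμ x]
      exact hK.measure_pos hμ hL.isClopen_base hL.base_nonempty
  obtain ⟨f, hf, -⟩ := exists_isCut_of_measure_lt hK.toGoodFamily hL (hU.inter hL.isClopen_base)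
    ⟨x, hxU, hx⟩ fun μ hμ => (μ.apply_mono Set.inter_subset_left).trans_lt (hlt μ hμ)
  exact ⟨f, hf⟩

lemma exists_bases_eq_base (hK : CompactGoodFamily K) (hT : IsTower K (L ::ₘ H)) :
    ∃ S, CutAndStack K (L ::ₘ H) S ∧ bases S = base L := by
  have hL := hT.isColumn L (by simp)
  obtain ⟨𝒰, h𝒰, hsmall⟩ :=
    exists_finset_forall_decides_measure_lt hK hL.isClopen_base hL.base_nonempty
  obtain ⟨H', hH', hc⟩ := exists_compat_finset hK.toGoodFamily (T := H)
    (fun N hN => hT.isColumn N (by simp [hN])) h𝒰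
  have hT' := hT.cutAndStack (hH'.cons L)
  have hlt : ∀ M ∈ H', ∀ μ ∈ K, μ (base M) < μ (bases {L}) := by
    intro M hM
    have hM' := hT'.isColumn M (by simp [hM])
    simpa using hsmall _ hM'.base_nonempty fun U hU =>
      hc U hU _ (mem_atoms.2 ⟨M, hM, hM'.base_mem⟩)
  obtain ⟨S, hS, hSb⟩ := exists_stack_all hK.toGoodFamily (by simpa using hT') hlt
  exact ⟨S, (hH'.cons L).trans (by simpa using hS), by simpa using hSb⟩

/-- Cut `L₀` in two, stack all the other columns on one half, and then, upside down, stack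
everything below the other half. -/
lemma exists_bases_subset_tops_subset (hK : CompactGoodFamily K) (hT : IsKR K T) (hL₀ : L₀ ∈ T) :
    ∃ S, CutAndStack K T S ∧ bases S ⊆ base L₀ ∧ tops S ⊆ base L₀.reverse := by
  obtain ⟨T', rfl⟩ := Multiset.exists_cons_of_mem hL₀
  have hL := hT.isColumn L₀ hL₀
  obtain ⟨f, hf⟩ := hK.exists_isCut hL
  have hcut := (CutOrStack.cut hf T').cutAndStack
  rw [Multiset.cons_swap] at hcut
  have hsdiff : ∀ B ∈ L₀, B \ f B ⊆ B := fun B _ => Set.sdiff_subset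
  set L₁ := L₀.map f
  set L₂ := L₀.map fun B => B \ f B
  have hT₁ := hT.cutAndStack hcut
  have hT₁' : IsTower K (L₁ ::ₘ T') := by
    refine IsTower.right (S := {L₂}) ?_
    rw [Multiset.singleton_add]
    exact hT₁.isTower
  obtain ⟨S₁, hS₁, hS₁b⟩ := exists_bases_eq_base hK hT₁'
  have hT₂ := (hT₁.cutAndStack (hS₁.cons L₂)).reverse.isTower
  rw [Multiset.map_cons] at hT₂
  obtain ⟨S₂, hS₂, hS₂b⟩ := exists_bases_eq_base hK hT₂
  have hS₂r : CutAndStack K (L₂ ::ₘ S₁) (S₂.map List.reverse) := by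
    simpa [Multiset.map_map] using hS₂.reverse
  refine ⟨S₂.map List.reverse, hcut.trans ((hS₁.cons L₂).trans hS₂r), ?_, ?_⟩
  · refine hS₂r.bases_subset.trans ?_
    rw [bases_cons, hS₁b]
    exact Set.union_subset (base_map_subset hsdiff) (base_map_subset hf.subset)
  · rw [tops_map_reverse, hS₂b, ← List.map_reverse]
    exact base_map_subset fun _ _ => Set.sdiff_subset

end Compactness

/-! ### Balancing equivalent clopen sets -/

section Balancing

open scoped Classical in
/-- The number of atoms of the column `L` inside `U` minus the number of those inside `V`. A
`K`-preserving homeomorphism permuting the atoms of each column can exchange `U` and `V` only if all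
imbalances vanish. -/
noncomputable def imbalance {X : Type*} (U V : Set X) (L : List (Set X)) : ℤ :=
  (L.countP (· ⊆ U) : ℤ) - L.countP (· ⊆ V)

section Weights

variable {ι α : Type*} {s : Multiset α} {a : α → ℝ} {N : ℝ}

lemma mul_sum_filter_add_sum (s : Multiset α) (a m : α → ℝ) (N : ℝ) :
    N * ((s.filter (a · < 0)).map m).sum + (s.map fun x => a x * m x).sum =
      (s.map fun x => (if a x < 0 then N + a x else a x) * m x).sum := by
  induction s using Multiset.induction_on with
  | empty => simp
  | cons x s ih =>
    simp only [Multiset.filter_cons, Multiset.map_add, Multiset.sum_add, Multiset.map_cons,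
      Multiset.sum_cons]
    split_ifs <;> simp only [Multiset.map_singleton, Multiset.sum_singleton, Multiset.map_zero,
      Multiset.sum_zero] <;> linarith

/-- The difference of the two sides is `1 / N` times the sum in `mul_sum_filter_add_sum`, whose
terms are all nonnegative, and vanish or not independently of `i`. -/
lemma eq_or_lt_sum_filter (hN : 0 < N) (ha : ∀ x ∈ s, -N ≤ a x) {I : Set ι} {m : ι → α → ℝ}
    {m₀ : ι → ℝ} (hm : ∀ i ∈ I, ∀ x ∈ s, 0 < m i x)
    (h : ∀ i ∈ I, N * m₀ i + (s.map fun x => a x * m i x).sum = 0) :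
    (∀ i ∈ I, m₀ i = ((s.filter (a · < 0)).map (m i)).sum) ∨
      ∀ i ∈ I, m₀ i < ((s.filter (a · < 0)).map (m i)).sum := by
  set slack : α → ℝ := fun x => if a x < 0 then N + a x else a x
  have hslack : ∀ x ∈ s, 0 ≤ slack x := by
    intro x hx
    have := ha x hx
    simp only [slack]
    split_ifs <;> linarith
  have hsum : ∀ i ∈ I, N * ((s.filter (a · < 0)).map (m i)).sum =
      N * m₀ i + (s.map fun x => slack x * m i x).sum := by
    intro i hi
    linarith [h i hi, mul_sum_filter_add_sum s a (m i) N]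
  by_cases hzero : ∀ x ∈ s, slack x = 0
  · refine .inl fun i hi => mul_left_cancel₀ hN.ne' ?_
    rw [hsum i hi, Multiset.sum_eq_zero (s := s.map _), add_zero]
    simpa using fun x hx => Or.inl (hzero x hx)
  · push Not at hzero
    obtain ⟨x, hx, hx₀⟩ := hzero
    refine .inr fun i hi => lt_of_mul_lt_mul_left ?_ hN.le
    rw [hsum i hi]
    have hnonneg : ∀ y ∈ s, 0 ≤ slack y * m i y :=
      fun y hy => mul_nonneg (hslack y hy) (hm i hi y hy).le
    have hpos : 0 < slack x * m i x :=
      mul_pos ((hslack x hx).lt_of_ne' hx₀) (hm i hi x hx)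
    exact lt_add_of_pos_right _ (hpos.trans_le (Multiset.single_le_sum (by simpa using hnonneg) _
      (Multiset.mem_map_of_mem (fun y => slack y * m i y) hx)))

end Weights

section Imbalance

variable {X : Type*} {F F' : ColumnFamily X} {L L' M : List (Set X)} {U V : Set X}

lemma imbalance_append : imbalance U V (L ++ M) = imbalance U V L + imbalance U V M := by
  simp only [imbalance, List.countP_append]
  push_cast
  ring

lemma imbalance_swap : imbalance V U L = -imbalance U V L := by
  simp [imbalance]

open scoped Classical in
lemma IsPiece.countP_subset_eq (h : IsPiece L' L) (hU : ∀ B ∈ L, Decides B U) :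
    L'.countP (· ⊆ U) = L.countP (· ⊆ U) := by
  unfold IsPiece at h
  induction h with
  | nil => rfl
  | @cons B' B _ _ hB _ ih =>
    have hiff : B' ⊆ U ↔ B ⊆ U := by
      refine ⟨fun hB'U => (hU B (by simp)).resolve_right fun hd => ?_, hB.1.trans⟩
      exact hB.2.not_subset_empty fun x hx => hd.le_bot ⟨hB.1 hx, hB'U hx⟩
    rw [List.countP_cons, List.countP_cons, ih fun C hC => hU C (by simp [hC])]
    simp [hiff]

lemma IsPiece.imbalance_eq (h : IsPiece L' L) (hL : L ∈ F) (hU : Compat F U) (hV : Compat F V) :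
    imbalance U V L' = imbalance U V L := by
  rw [imbalance, imbalance, h.countP_subset_eq fun B hB => hU B (mem_atoms.2 ⟨L, hL, hB⟩),
    h.countP_subset_eq fun B hB => hV B (mem_atoms.2 ⟨L, hL, hB⟩)]

lemma abs_imbalance_append_lt {L₀ L₁ : List (Set X)} {N : ℤ} (hU : Compat F U)
    (hV : Compat F V) (hL : L ∈ F) (hL₀ : L₀ ∈ F) (hL₁ : IsPiece L₁ L) (hM : IsPiece M L₀)
    (hneg : imbalance U V L < 0) (hle : |imbalance U V L| ≤ N) (hN : imbalance U V L₀ = N) :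
    |imbalance U V (L₁ ++ M)| < N := by
  rw [imbalance_append, hL₁.imbalance_eq hL hU hV, hM.imbalance_eq hL₀ hU hV, hN]
  rw [abs_le] at hle
  exact abs_lt.2 ⟨by lia, by lia⟩

lemma Trims.countP_le (h : Trims F' F) (p : List (Set X) → Prop) [DecidablePred p]
    (hp : ∀ L ∈ F, ∀ L', IsPiece L' L → p L' → p L) : F'.countP p ≤ F.countP p := by
  obtain ⟨F₀, hF₀, hF'⟩ := h
  refine le_trans ?_ (Multiset.countP_le_of_le p hF₀)
  replace hp := fun L hL => hp L (Multiset.mem_of_le hF₀ hL)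
  clear hF₀
  induction hF' with
  | zero => rfl
  | @cons L' L F' F hL _ ih =>
    have hcount := ih fun M hM => hp M (by simp [hM])
    have hpL := hp L (by simp) L' hL
    rw [Multiset.countP_cons, Multiset.countP_cons]
    split_ifs <;> grind

end Imbalance

variable {X : Type*} [TopologicalSpace X] [MeasurableSpace X] [OpensMeasurableSpace X]
  {K : Set (ProbabilityMeasure X)} {T : ColumnFamily X} {L₀ : List (Set X)} {U V : Set X} {N : ℤ}
  {μ : ProbabilityMeasure X}

open scoped Classical in
omit [OpensMeasurableSpace X] in
lemma IsColumn.sum_measure_filter {L : List (Set X)} (hL : IsColumn K L) (hμ : μ ∈ K) (U : Set X) :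
    (((L : Multiset (Set X)).filter (· ⊆ U)).map fun B => μ B).sum =
      L.countP (· ⊆ U) * μ (base L) := by
  have hconst : ∀ B ∈ (L : Multiset (Set X)).filter (· ⊆ U), μ B = μ (base L) := fun B hB =>
    hL.equiv B (by simpa using Multiset.mem_of_mem_filter hB) _ hL.base_mem μ hμ
  rw [Multiset.map_congr rfl hconst, Multiset.map_const', Multiset.sum_replicate, nsmul_eq_mul,
    ← Multiset.countP_eq_card_filter, Multiset.coe_countP]

open scoped Classical in
lemma IsKR.sum_measure_filter (hT : IsKR K T) (hU : Compat T U) (ν : ProbabilityMeasure X) :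
    (((atoms T).filter (· ⊆ U)).map fun B => ν B).sum = ν U := by
  have hclopen : ∀ B ∈ atoms T, IsClopen B := by
    simpa using fun B L hL hB => (hT.isColumn L hL).isClopen B hB
  have hunion : {x | ∃ B ∈ (atoms T).filter (· ⊆ U), x ∈ B} = U := by
    ext x
    obtain ⟨B, hB, hxB⟩ := coverCount_pos.1 ((hT.coverCount_eq x).symm ▸ one_pos)
    refine ⟨fun ⟨B, hB, hx⟩ => Multiset.of_mem_filter hB hx, fun hx => ⟨B, ?_, hxB⟩⟩
    exact Multiset.mem_filter.2 ⟨hB, (hU B hB).resolve_right fun h => h.le_bot ⟨hxB, hx⟩⟩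
  rw [sum_measure_eq_measure_of_coverCount_le, hunion]
  · exact fun B hB => hclopen B (Multiset.mem_of_mem_filter hB)
  · exact fun x => (coverCount_mono (Multiset.filter_le _ _) x).trans (hT.coverCount_eq x).le

open scoped Classical in
lemma IsKR.measure_eq_sum (hT : IsKR K T) (hU : Compat T U) (hμ : μ ∈ K) :
    μ U = (T.map fun L => L.countP (· ⊆ U) * μ (base L)).sum := by
  rw [← hT.sum_measure_filter hU, atoms, Multiset.filter_bind, Multiset.map_bind, Multiset.sum_bind]
  exact congrArg _ (Multiset.map_congr rfl fun L hL => (hT.isColumn L hL).sum_measure_filter hμ U)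

lemma IsKR.sum_imbalance (hT : IsKR K T) (hU : Compat T U) (hV : Compat T V)
    (hUV : KEquiv K U V) (hμ : μ ∈ K) :
    (T.map fun L => (imbalance U V L : ℝ) * μ (base L)).sum = 0 := by
  have h := hUV μ hμ
  rw [hT.measure_eq_sum hU hμ, hT.measure_eq_sum hV hμ, ← NNReal.coe_inj, ← NNReal.coe_toRealHom,
    map_multiset_sum, map_multiset_sum, ← sub_eq_zero, Multiset.map_map, Multiset.map_map,
    ← Multiset.sum_map_sub] at h
  simpa [imbalance, sub_mul] using h

lemma IsKR.equiv_or_lt_bases_filter (hK : GoodFamily K) (hT : IsKR K (L₀ ::ₘ T))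
    (hU : Compat (L₀ ::ₘ T) U) (hV : Compat (L₀ ::ₘ T) V) (hUV : KEquiv K U V)
    (hle : ∀ L ∈ T, |imbalance U V L| ≤ N) (hN : 0 < N) (hL₀ : imbalance U V L₀ = N) :
    KEquiv K (base L₀) (bases (T.filter (imbalance U V · < 0))) ∨
      ∀ μ ∈ K, μ (base L₀) < μ (bases (T.filter (imbalance U V · < 0))) := by
  have hJ : IsTower K (T.filter (imbalance U V · < 0)) := by
    refine IsTower.left (T := L₀ ::ₘ T.filter (¬ imbalance U V · < 0)) ?_
    rw [Multiset.add_cons, Multiset.filter_add_not]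
    exact hT.isTower
  have hsum : ∀ μ : ProbabilityMeasure X, (μ (bases (T.filter (imbalance U V · < 0))) : ℝ) =
      ((T.filter fun L => (imbalance U V L : ℝ) < 0).map fun L => (μ (base L) : ℝ)).sum := by
    intro μ
    rw [← hJ.sum_measure_base, ← NNReal.coe_toRealHom, map_multiset_sum, Multiset.map_map]
    simp [Function.comp_def]
  have h := eq_or_lt_sum_filter (s := T) (a := fun L => (imbalance U V L : ℝ)) (N := N) (I := K)
    (m := fun μ L => (μ (base L) : ℝ)) (m₀ := fun μ => (μ (base L₀) : ℝ)) (by exact_mod_cast hN)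
    (fun L hL => by exact_mod_cast (abs_le.1 (hle L hL)).1)
    (fun μ hμ L hL => by
      have hcol := hT.isColumn L (by simp [hL])
      exact_mod_cast hK.measure_pos hμ hcol.isClopen_base hcol.base_nonempty)
    (fun μ hμ => by simpa [hL₀] using hT.sum_imbalance hU hV hUV hμ)
  refine h.imp (fun h μ hμ => ?_) (fun h μ hμ => ?_)
  · exact_mod_cast (h μ hμ).trans (hsum μ).symm
  · exact_mod_cast (h μ hμ).trans_eq (hsum μ).symm

/-- A column of largest imbalance `N` is stacked on columns of negative imbalance. -/
lemma exists_countP_lt_of_imbalance_eq (hK : GoodFamily K) (hT : IsKR K T) (hU : Compat T U)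
    (hV : Compat T V) (hUV : KEquiv K U V) (hle : ∀ L ∈ T, |imbalance U V L| ≤ N) (hN : 0 < N)
    (hL₀ : L₀ ∈ T) (hL₀N : imbalance U V L₀ = N) :
    ∃ S, CutAndStack K T S ∧ (∀ L ∈ S, |imbalance U V L| ≤ N) ∧
      S.countP (|imbalance U V ·| = N) < T.countP (|imbalance U V ·| = N) := by
  obtain ⟨T', rfl⟩ := Multiset.exists_cons_of_mem hL₀
  have hdich := hT.equiv_or_lt_bases_filter hK hU hV hUV (fun L hL => hle L (by simp [hL])) hN hL₀N
  set J := T'.filter (imbalance U V · < 0)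
  set P := T'.filter (¬ imbalance U V · < 0)
  have hJP : J + P = T' := Multiset.filter_add_not _ _
  have hJT : ∀ L ∈ J, L ∈ L₀ ::ₘ T' := by simp +contextual [J]
  have hJneg : ∀ L ∈ J, imbalance U V L < 0 := fun L hL => (Multiset.mem_filter.1 hL).2
  have hJ : IsTower K J := by
    refine IsTower.left (T := L₀ ::ₘ P) ?_
    rw [Multiset.add_cons, hJP]
    exact hT.isTower
  obtain ⟨S, F₂, hS, -, hSp, hF₂⟩ := exists_stack_of_measure_le hK (hT.isColumn L₀ hL₀) hJ hdich
  have hSlt : ∀ L ∈ S, |imbalance U V L| < N := by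
    intro L' hL'
    obtain ⟨L, hL, L₁, M, hL₁, hM, rfl⟩ := hSp L' hL'
    exact abs_imbalance_append_lt hU hV (hJT L hL) hL₀ hL₁ hM (hJneg L hL)
      (hle L (hJT L hL)) hL₀N
  refine ⟨S + F₂ + P, ?_, ?_, ?_⟩
  · simpa [hJP] using hS.add_right P
  · simp only [Multiset.mem_add]
    rintro L ((hL | hL) | hL)
    · exact (hSlt L hL).le
    · obtain ⟨M, hM, hp⟩ := hF₂.exists_isPiece hL
      exact hp.imbalance_eq (hJT M hM) hU hV ▸ hle M (hJT M hM)
    · exact hle L (by simp [Multiset.mem_of_mem_filter hL])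
  · have hS₀ : S.countP (|imbalance U V ·| = N) = 0 :=
      Multiset.countP_eq_zero.2 fun L hL => (hSlt L hL).ne
    have hF₂J : F₂.countP (|imbalance U V ·| = N) ≤ J.countP (|imbalance U V ·| = N) :=
      hF₂.countP_le _ fun L hL L' hp h => hp.imbalance_eq (hJT L hL) hU hV ▸ h
    rw [Multiset.countP_cons_of_pos _ (by rw [hL₀N, abs_of_pos hN]), ← hJP]
    simp only [Multiset.countP_add, hS₀]
    lia

lemma exists_countP_lt_of_abs_imbalance_eq (hK : GoodFamily K) (hT : IsKR K T) (hU : Compat T U)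
    (hV : Compat T V) (hUV : KEquiv K U V) (hle : ∀ L ∈ T, |imbalance U V L| ≤ N) (hN : 0 < N)
    (hL₀ : L₀ ∈ T) (hL₀N : |imbalance U V L₀| = N) :
    ∃ S, CutAndStack K T S ∧ (∀ L ∈ S, |imbalance U V L| ≤ N) ∧
      S.countP (|imbalance U V ·| = N) < T.countP (|imbalance U V ·| = N) := by
  rcases (abs_eq hN.le).1 hL₀N with h | h
  · exact exists_countP_lt_of_imbalance_eq hK hT hU hV hUV hle hN hL₀ h
  · have habs : ∀ L : List (Set X), |imbalance V U L| = |imbalance U V L| := fun L => by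
      rw [imbalance_swap, abs_neg]
    simpa only [habs] using exists_countP_lt_of_imbalance_eq hK hT hV hU hUV.symm
      (by simpa only [habs] using hle) hN hL₀ (by rw [imbalance_swap, h, neg_neg])

lemma exists_abs_imbalance_lt (hK : GoodFamily K) (hT : IsKR K T) (hU : Compat T U)
    (hV : Compat T V) (hUV : KEquiv K U V) (hle : ∀ L ∈ T, |imbalance U V L| ≤ N) (hN : 0 < N) :
    ∃ S, CutAndStack K T S ∧ ∀ L ∈ S, |imbalance U V L| < N := by
  induction hc : T.countP (|imbalance U V ·| = N) using Nat.strong_induction_on generalizing T with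
  | _ c ih =>
    by_cases h : ∃ L ∈ T, |imbalance U V L| = N
    · obtain ⟨L₀, hL₀, hL₀N⟩ := h
      obtain ⟨S, hS, hleS, hlt⟩ :=
        exists_countP_lt_of_abs_imbalance_eq hK hT hU hV hUV hle hN hL₀ hL₀N
      obtain ⟨R, hR, hRlt⟩ := ih _ (hc ▸ hlt) (hT.cutAndStack hS) (hU.cutAndStack hS)
        (hV.cutAndStack hS) hleS rfl
      exact ⟨R, hS.trans hR, hRlt⟩
    · push Not at h
      exact ⟨T, .refl T, fun L hL => (hle L hL).lt_of_ne (h L hL)⟩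

lemma exists_imbalance_eq_zero (hK : GoodFamily K) (hT : IsKR K T) (hU : Compat T U)
    (hV : Compat T V) (hUV : KEquiv K U V) :
    ∃ S, CutAndStack K T S ∧ ∀ L ∈ S, imbalance U V L = 0 := by
  obtain ⟨N, hle⟩ : ∃ N : ℕ, ∀ L ∈ T, |imbalance U V L| ≤ N := by
    refine ⟨(T.map fun L => (imbalance U V L).natAbs).sum, fun L hL => ?_⟩
    rw [Int.abs_eq_natAbs, Nat.cast_le]
    exact Multiset.single_le_sum (by simp) _
      (Multiset.mem_map_of_mem (fun L => (imbalance U V L).natAbs) hL)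
  induction N generalizing T with
  | zero => exact ⟨T, .refl T, by simpa using hle⟩
  | succ N ih =>
    obtain ⟨S, hS, hlt⟩ := exists_abs_imbalance_lt hK hT hU hV hUV hle (by positivity)
    obtain ⟨R, hR, hzero⟩ := ih (hT.cutAndStack hS) (hU.cutAndStack hS) (hV.cutAndStack hS)
      fun L hL => Int.lt_add_one_iff.1 (by exact_mod_cast hlt L hL)
    exact ⟨R, hS.trans hR, hzero⟩

end Balancing

/-! ### Resolving sequences -/

section Resolving

/-- Besides being compatible with `U`, the family has its base on one side of `U`, and its top on
one side of `U`: the constraint `Link T` then determines on which side of `U` the image and the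
preimage of a point lie. -/
structure Fine {X : Type*} (T : ColumnFamily X) (U : Set X) : Prop where
  compat : Compat T U
  decides_bases : Decides (bases T) U
  decides_tops : Decides (tops T) U

variable {X : Type*} [TopologicalSpace X] [MeasurableSpace X]

/-- `T` is fine for `U` and `V` and, if `U ∼_K V`, each of its columns has as many atoms in `U` as
in `V`. -/
structure Resolves (K : Set (ProbabilityMeasure X)) (T : ColumnFamily X) (U V : Set X) : Prop where
  fine_left : Fine T U
  fine_right : Fine T V
  imbalance_eq_zero : KEquiv K U V → ∀ L ∈ T, imbalance U V L = 0

/-- A sequence of successively refining KR-partitions which resolves all pairs of clopen sets. -/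
structure IsResolving (K : Set (ProbabilityMeasure X)) (Q : ℕ → ColumnFamily X) : Prop where
  isKR : ∀ n, IsKR K (Q n)
  cutAndStack : ∀ n, CutAndStack K (Q n) (Q (n + 1))
  exists_resolves : ∀ U V, IsClopen U → IsClopen V → ∃ n, Resolves K (Q n) U V

variable {K : Set (ProbabilityMeasure X)} {Q : ℕ → ColumnFamily X} {S T : ColumnFamily X}
  {L₀ : List (Set X)} {U V : Set X}

omit [TopologicalSpace X] [MeasurableSpace X] in
lemma Fine.reverse (h : Fine T U) : Fine (T.map List.reverse) U where
  compat := by simpa only [Compat, atoms_map_reverse] using h.compat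
  decides_bases := h.decides_tops
  decides_tops := by simpa only [tops_map_reverse] using h.decides_bases

lemma Fine.cutAndStack (h : Fine T U) (hS : CutAndStack K T S) : Fine S U :=
  ⟨h.compat.cutAndStack hS, h.decides_bases.mono hS.bases_subset,
    h.decides_tops.mono hS.tops_subset⟩

lemma Compat.fine (hU : Compat T U) (hT : IsKR K T) (hL₀ : L₀ ∈ T) (hS : CutAndStack K T S)
    (hb : bases S ⊆ base L₀) (ht : tops S ⊆ base L₀.reverse) : Fine S U where
  compat := hU.cutAndStack hS
  decides_bases := (hU _ (mem_atoms.2 ⟨L₀, hL₀, (hT.isColumn L₀ hL₀).base_mem⟩)).mono hb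
  decides_tops := by
    have htop := (hT.isColumn L₀ hL₀).reverse.base_mem
    exact (hU _ (mem_atoms.2 ⟨L₀, hL₀, List.mem_reverse.1 htop⟩)).mono ht

lemma IsResolving.exists_fine (hQ : IsResolving K Q) {A : Set X} (hA : IsClopen A) :
    ∃ n, Fine (Q n) A :=
  (hQ.exists_resolves A A hA hA).imp fun _ h => h.fine_left

lemma IsKR.exists_mem [Nonempty X] (hT : IsKR K T) : ∃ L, L ∈ T := by
  obtain ⟨x⟩ := ‹Nonempty X›
  obtain ⟨B, hB, -⟩ := coverCount_pos.1 ((hT.coverCount_eq x).symm ▸ one_pos)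
  exact (mem_atoms.1 hB).imp fun _ h => h.1

variable [CompactSpace X] [TopologicalSpace.MetrizableSpace X] [TotallyDisconnectedSpace X]
  [BorelSpace X] [Nonempty X]

lemma exists_resolves (hK : CompactGoodFamily K) (hT : IsKR K T) (hU : IsClopen U)
    (hV : IsClopen V) : ∃ S, CutAndStack K T S ∧ Resolves K S U V := by
  obtain ⟨T₁, hT₁, hU₁⟩ := exists_compat hK.toGoodFamily hT.isColumn hU
  have hKR₁ := hT.cutAndStack hT₁
  obtain ⟨T₂, hT₂, hV₂⟩ := exists_compat hK.toGoodFamily hKR₁.isColumn hV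
  have hKR₂ := hKR₁.cutAndStack hT₂
  have hU₂ := hU₁.cutAndStack hT₂
  obtain ⟨L₀, hL₀⟩ := hKR₂.exists_mem
  obtain ⟨T₃, hT₃, hb, ht⟩ := exists_bases_subset_tops_subset hK hKR₂ hL₀
  have hfU := hU₂.fine hKR₂ hL₀ hT₃ hb ht
  have hfV := hV₂.fine hKR₂ hL₀ hT₃ hb ht
  have hcs := hT₁.trans (hT₂.trans hT₃)
  by_cases hUV : KEquiv K U V
  · obtain ⟨S, hS, hbal⟩ := exists_imbalance_eq_zero hK.toGoodFamily (hKR₂.cutAndStack hT₃)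
      hfU.compat hfV.compat hUV
    exact ⟨S, hcs.trans hS, hfU.cutAndStack hS, hfV.cutAndStack hS, fun _ => hbal⟩
  · exact ⟨T₃, hcs, hfU, hfV, fun h => absurd h hUV⟩

lemma exists_isResolving (hK : CompactGoodFamily K) (hT : IsKR K T) :
    ∃ Q, Q 0 = T ∧ IsResolving K Q := by
  have : Countable (TopologicalSpace.Clopens X) :=
    TopologicalSpace.Clopens.countable_iff_secondCountable.2 inferInstance
  obtain ⟨e, he⟩ := exists_surjective_nat
    (TopologicalSpace.Clopens X × TopologicalSpace.Clopens X)
  choose! next hnext hres using fun (n : ℕ) (T : ColumnFamily X) (hT : IsKR K T) =>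
    exists_resolves hK hT (e n).1.isClopen (e n).2.isClopen
  let Q : ℕ → ColumnFamily X := fun n => Nat.rec T next n
  have hQ : ∀ n, IsKR K (Q n) := fun n => by
    induction n with
    | zero => exact hT
    | succ n ih => exact ih.cutAndStack (hnext n _ ih)
  refine ⟨Q, rfl, hQ, fun n => hnext n _ (hQ n), fun U V hU hV => ?_⟩
  obtain ⟨n, hn⟩ := he (⟨U, hU⟩, ⟨V, hV⟩)
  have hn' := hres n (Q n) (hQ n)
  rw [hn] at hn'
  exact ⟨n + 1, hn'⟩

end Resolving

/-! ### The limit homeomorphism -/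

section ClosedRelations

variable {X Y : Type*} [TopologicalSpace X] [TopologicalSpace Y] [CompactSpace Y]

lemma continuous_of_isClosed_graph {f : X → Y} (hf : IsClosed {p : X × Y | p.2 = f p.1}) :
    Continuous f := by
  refine continuous_iff_isClosed.2 fun s hs => ?_
  have hproj : f ⁻¹' s = Prod.fst '' ({p : X × Y | p.2 = f p.1} ∩ Prod.snd ⁻¹' s) := by
    ext x
    simp
  rw [hproj]
  exact isClosedMap_fst_of_compactSpace _ (hf.inter (hs.preimage continuous_snd))

lemma exists_forall_of_antitone_isClosed {R : ℕ → X → Y → Prop}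
    (hanti : ∀ n x y, R (n + 1) x y → R n x y) (hclosed : ∀ n, IsClosed {p : X × Y | R n p.1 p.2})
    (htotal : ∀ n, Relator.LeftTotal (R n)) (x : X) : ∃ y, ∀ n, R n x y := by
  have hfibre : ∀ n, IsClosed {y | R n x y} := fun n =>
    (hclosed n).preimage (Continuous.prodMk_right x)
  obtain ⟨y, hy⟩ := IsCompact.nonempty_iInter_of_sequence_nonempty_isCompact_isClosed
    (fun n => {y | R n x y}) (fun n => hanti n x) (fun n => htotal n x) (hfibre 0).isCompact hfibre
  exact ⟨y, Set.mem_iInter.1 hy⟩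

lemma exists_homeomorph_of_antitone_isClosed [CompactSpace X] [T2Space Y]
    {R : ℕ → X → Y → Prop} (hanti : ∀ n x y, R (n + 1) x y → R n x y)
    (hclosed : ∀ n, IsClosed {p : X × Y | R n p.1 p.2})
    (htotal : ∀ n, Relator.BiTotal (R n)) (hunique : Relator.BiUnique fun x y => ∀ n, R n x y) :
    ∃ h : X ≃ₜ Y, ∀ n x, R n x (h x) := by
  choose f hf using exists_forall_of_antitone_isClosed hanti hclosed fun n => (htotal n).1
  have hsurj : ∀ y, ∃ x, ∀ n, R n x y :=
    exists_forall_of_antitone_isClosed (R := fun n y x => R n x y) (fun n y x => hanti n x y)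
      (fun n => (hclosed n).preimage continuous_swap) fun n => (htotal n).2
  have hgraph : {p : X × Y | p.2 = f p.1} = ⋂ n, {p | R n p.1 p.2} := by
    ext ⟨x, y⟩
    simp only [Set.mem_iInter, Set.mem_ofPred_eq]
    exact ⟨fun h => h ▸ hf x, fun h => hunique.2 h (hf x)⟩
  have hcont : Continuous f :=
    continuous_of_isClosed_graph (hgraph ▸ isClosed_iInter hclosed)
  have hbij : Function.Bijective f := by
    refine ⟨fun x x' h => hunique.1 (hf x) (h ▸ hf x'), fun y => ?_⟩
    obtain ⟨x, hx⟩ := hsurj y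
    exact ⟨x, hunique.2 (hf x) hx⟩
  exact ⟨Continuous.homeoOfEquivCompactToT2 (f := .ofBijective f hbij) hcont, fun n x => hf x n⟩

end ClosedRelations

section Positions

/-- The point `x` lies in the atom of index `j` of the column `L` of `T`. -/
def InLevel {X : Type*} (T : ColumnFamily X) (L : List (Set X)) (j : ℕ) (x : X) : Prop :=
  L ∈ T ∧ ∃ h : j < L.length, x ∈ L[j]

variable {X : Type*} {T : ColumnFamily X} {L M : List (Set X)} {A : Set X} {i j : ℕ}
  {x x' y y' : X}

lemma Compat.compl (hA : Compat T A) : Compat T Aᶜ := fun B hB =>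
  (hA B hB).symm.imp Set.subset_compl_iff_disjoint_right.2 Set.disjoint_compl_right_iff_subset.2

lemma Compat.mem_iff (hA : Compat T A) (hx : InLevel T L i x) (hx' : InLevel T L i x') :
    x ∈ A ↔ x' ∈ A := by
  obtain ⟨hL, hi, hxi⟩ := hx
  obtain ⟨-, _, hxi'⟩ := hx'
  exact (hA _ (mem_atoms.2 ⟨L, hL, List.getElem_mem hi⟩)).mem_iff hxi hxi'

lemma eq_of_coverCount_le_one
    (hc : coverCount (L : Multiset (Set X)) x ≤ 1) (hi : i < L.length) (hj : j < L.length)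
    (hxi : x ∈ L[i]) (hxj : x ∈ L[j]) : i = j := by
  by_contra hne
  wlog hij : i < j generalizing i j
  · exact this hj hi hxj hxi (Ne.symm hne) (by lia)
  have htake : 0 < coverCount (L.take j : Multiset (Set X)) x :=
    coverCount_pos.2 ⟨L[i], List.mem_take_iff_getElem.2 ⟨i, by lia, rfl⟩, hxi⟩
  have hdrop : 0 < coverCount (L.drop j : Multiset (Set X)) x :=
    coverCount_pos.2 ⟨L[j], List.mem_drop_iff_getElem.2 ⟨0, by lia, by simp⟩, hxj⟩
  rw [← List.take_append_drop j L, ← Multiset.coe_add, coverCount_add] at hc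
  lia

variable [TopologicalSpace X] [MeasurableSpace X] {K : Set (ProbabilityMeasure X)}

lemma IsKR.exists_inLevel (hT : IsKR K T) (x : X) : ∃ L j, InLevel T L j x := by
  obtain ⟨B, hB, hx⟩ := coverCount_pos.1 ((hT.coverCount_eq x).symm ▸ one_pos)
  obtain ⟨L, hL, hBL⟩ := mem_atoms.1 hB
  obtain ⟨j, hj, rfl⟩ := List.getElem_of_mem hBL
  exact ⟨L, j, hL, hj, hx⟩

lemma InLevel.unique (h : InLevel T L i x) (h' : InLevel T M j x) (hT : IsKR K T) :
    L = M ∧ i = j := by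
  obtain ⟨hL, hi, hxi⟩ := h
  obtain ⟨hM, hj, hxj⟩ := h'
  obtain ⟨R, rfl⟩ := Multiset.exists_cons_of_mem hL
  have hc := hT.coverCount_eq x
  rw [atoms_cons, coverCount_add] at hc
  rcases Multiset.mem_cons.1 hM with rfl | hMR
  · exact ⟨rfl, eq_of_coverCount_le_one (by lia) hi hj hxi hxj⟩
  · have hxL : 0 < coverCount (L : Multiset (Set X)) x := coverCount_pos.2 ⟨L[i], by simp, hxi⟩
    have hxR : 0 < coverCount (atoms R) x :=
      coverCount_pos.2 ⟨M[j], mem_atoms.2 ⟨M, hMR, List.getElem_mem hj⟩, hxj⟩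
    lia

lemma IsKR.inLevel_zero (hT : IsKR K T) (hL : L ∈ T) : InLevel T L 0 x ↔ x ∈ base L := by
  have hpos := List.length_pos_of_ne_nil (hT.isColumn L hL).ne_nil
  simp [InLevel, hL, hpos, base_eq_getElem hpos]

lemma IsKR.inLevel_last (hT : IsKR K T) (hL : L ∈ T) :
    InLevel T L (L.length - 1) x ↔ x ∈ base L.reverse := by
  have hpos := List.length_pos_of_ne_nil (hT.isColumn L hL).ne_nil
  simp [InLevel, hL, hpos, base_reverse_eq_getElem hpos]

lemma InLevel.mem_bases (h : InLevel T L 0 x) (hT : IsKR K T) : x ∈ bases T :=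
  ⟨L, h.1, (hT.inLevel_zero h.1).1 h⟩

lemma InLevel.mem_tops (h : InLevel T L i x) (hi : i + 1 = L.length) (hT : IsKR K T) :
    x ∈ tops T := by
  obtain rfl : i = L.length - 1 := by lia
  exact DynSimplex.mem_tops.2 ⟨L, h.1, (hT.inLevel_last h.1).1 h⟩

lemma link_iff (hT : IsKR K T) (hx : InLevel T L i x) (hy : InLevel T M j y) :
    Link T x y ↔ (L = M ∧ i + 1 = j) ∨ (i + 1 = L.length ∧ j = 0) := by
  constructor
  · rintro (⟨N, hN, k, hk, hxk, hyk⟩ | ⟨htop, N, hN, hyN⟩)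
    · obtain ⟨rfl, rfl⟩ := hx.unique ⟨hN, by lia, hxk⟩ hT
      obtain ⟨rfl, rfl⟩ := hy.unique ⟨hN, hk, hyk⟩ hT
      exact .inl ⟨rfl, rfl⟩
    · obtain ⟨N', hN', hxN'⟩ := mem_tops.1 htop
      obtain ⟨rfl, rfl⟩ := hx.unique ((hT.inLevel_last hN').2 hxN') hT
      obtain ⟨rfl, rfl⟩ := hy.unique ((hT.inLevel_zero hN).2 hyN) hT
      have := hx.2.1
      exact .inr ⟨by lia, rfl⟩
  · rintro (⟨rfl, rfl⟩ | ⟨hi, rfl⟩)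
    · obtain ⟨hL, _, hxi⟩ := hx
      obtain ⟨-, hj, hyj⟩ := hy
      exact .inl ⟨L, hL, i, hj, hxi, hyj⟩
    · exact .inr ⟨hx.mem_tops hi hT, hy.mem_bases hT⟩

lemma inLevel_iff_inLevel_succ (hT : IsKR K T) (h : Link T x y) (hj : j + 1 < L.length) :
    InLevel T L j x ↔ InLevel T L (j + 1) y := by
  obtain ⟨M, i, hx⟩ := hT.exists_inLevel x
  obtain ⟨N, k, hy⟩ := hT.exists_inLevel y
  constructor
  · intro hx'
    obtain ⟨rfl, rfl⟩ := hx.unique hx' hT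
    obtain ⟨rfl, rfl⟩ | ⟨hj', -⟩ := (link_iff hT hx hy).1 h
    exacts [hy, absurd hj' hj.ne]
  · intro hy'
    obtain ⟨rfl, rfl⟩ := hy.unique hy' hT
    obtain ⟨rfl, hij⟩ | ⟨-, hj'⟩ := (link_iff hT hx hy).1 h
    · obtain rfl : i = j := by lia
      exact hx
    · lia

lemma Fine.image_mem_iff (hA : Fine T A) (hT : IsKR K T) (h : Link T x y) (h' : Link T x y') :
    y ∈ A ↔ y' ∈ A := by
  obtain ⟨L, i, hx⟩ := hT.exists_inLevel x
  obtain ⟨M, j, hy⟩ := hT.exists_inLevel y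
  obtain ⟨M', j', hy'⟩ := hT.exists_inLevel y'
  have hj := hy.2.1
  have hj' := hy'.2.1
  rcases (link_iff hT hx hy).1 h with ⟨rfl, rfl⟩ | ⟨hi, rfl⟩ <;>
    rcases (link_iff hT hx hy').1 h' with ⟨rfl, rfl⟩ | ⟨hi', rfl⟩
  · exact hA.compat.mem_iff hy hy'
  · lia
  · lia
  · exact hA.decides_bases.mem_iff (hy.mem_bases hT) (hy'.mem_bases hT)

lemma Fine.preimage_mem_iff (hA : Fine T A) (hT : IsKR K T) (h : Link T x y) (h' : Link T x' y) :
    x ∈ A ↔ x' ∈ A :=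
  hA.reverse.image_mem_iff hT.reverse (link_map_reverse.2 h) (link_map_reverse.2 h')

lemma IsKR.leftTotal_link (hT : IsKR K T) : Relator.LeftTotal (Link T) := by
  intro x
  obtain ⟨L, i, hx⟩ := hT.exists_inLevel x
  have hL := hT.isColumn L hx.1
  by_cases hi : i + 1 < L.length
  · obtain ⟨y, hy⟩ := hL.nonempty _ (List.getElem_mem hi)
    exact ⟨y, (link_iff hT hx ⟨hx.1, hi, hy⟩).2 (.inl ⟨rfl, rfl⟩)⟩
  · obtain ⟨y, hy⟩ := hL.base_nonempty
    have := hx.2.1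
    exact ⟨y, (link_iff hT hx ((hT.inLevel_zero hx.1).2 hy)).2 (.inr ⟨by lia, rfl⟩)⟩

lemma IsKR.biTotal_link (hT : IsKR K T) : Relator.BiTotal (Link T) :=
  ⟨hT.leftTotal_link, fun y => (hT.reverse.leftTotal_link y).imp fun _ => link_map_reverse.1⟩

lemma IsKR.isClosed_link (hT : IsKR K T) : IsClosed {p : X × X | Link T p.1 p.2} := by
  classical
  have hclimbs : ∀ L ∈ T, IsClosed {p : X × X | Climbs L p.1 p.2} := by
    intro L hL
    have hatom : ∀ (j : ℕ) (h : j < L.length), IsClosed L[j] := fun j h =>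
      ((hT.isColumn L hL).isClopen _ (List.getElem_mem h)).1
    have hunion : {p : X × X | Climbs L p.1 p.2} =
        ⋃ j : Fin (L.length - 1), L[j.1] ×ˢ L[j.1 + 1] := by
      ext p
      simp only [Climbs, Set.mem_iUnion, Set.mem_prod, Set.mem_ofPred_eq]
      exact ⟨fun ⟨j, hj, h⟩ => ⟨⟨j, by lia⟩, h⟩, fun ⟨j, h⟩ => ⟨j, by lia, h⟩⟩
    rw [hunion]
    exact isClosed_iUnion_of_finite fun j => (hatom _ (by lia)).prod (hatom _ (by lia))
  have hunion : {p : X × X | Link T p.1 p.2} =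
      (⋃ L ∈ T.toFinset, {p : X × X | Climbs L p.1 p.2}) ∪ tops T ×ˢ bases T := by
    ext p
    simp [Link]
  rw [hunion]
  exact (isClosed_biUnion_finset fun L hL => hclimbs L (Multiset.mem_toFinset.1 hL)).union
    ((isClopen_bases hT.reverse.isColumn).1.prod (isClopen_bases hT.isColumn).1)

end Positions

section Limit

variable {X : Type*} [TopologicalSpace X] [CompactSpace X] [TotallyDisconnectedSpace X]
  [T2Space X] [MeasurableSpace X] {K : Set (ProbabilityMeasure X)} {Q : ℕ → ColumnFamily X}

lemma IsResolving.biUnique_link (hQ : IsResolving K Q) :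
    Relator.BiUnique fun x y => ∀ n, Link (Q n) x y := by
  constructor
  · intro x x' y h h'
    by_contra hne
    obtain ⟨A, hA, hxA, hxA'⟩ := exists_isClopen_of_totally_separated hne
    obtain ⟨n, hn⟩ := hQ.exists_fine hA
    exact hxA' ((hn.preimage_mem_iff (hQ.isKR n) (h n) (h' n)).1 hxA)
  · intro x y y' h h'
    by_contra hne
    obtain ⟨A, hA, hyA, hyA'⟩ := exists_isClopen_of_totally_separated hne
    obtain ⟨n, hn⟩ := hQ.exists_fine hA
    exact hyA' ((hn.image_mem_iff (hQ.isKR n) (h n) (h' n)).1 hyA)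

lemma IsResolving.exists_homeomorph (hQ : IsResolving K Q) :
    ∃ h : X ≃ₜ X, ∀ n x, Link (Q n) x (h x) :=
  exists_homeomorph_of_antitone_isClosed (fun n _ _ => (hQ.cutAndStack n).link)
    (fun n => (hQ.isKR n).isClosed_link) (fun n => (hQ.isKR n).biTotal_link) hQ.biUnique_link

end Limit

section Invariance

variable {X : Type*} [TopologicalSpace X] [MeasurableSpace X] {K : Set (ProbabilityMeasure X)}
  {T : ColumnFamily X} {A : Set X} {μ : ProbabilityMeasure X}

lemma IsKR.preimage_getElem_succ (hT : IsKR K T) {h : X → X} (hh : ∀ x, Link T x (h x))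
    {L : List (Set X)} (hL : L ∈ T) {j : ℕ} (hj : j + 1 < L.length) :
    h ⁻¹' L[j + 1] = L[j] := by
  ext x
  simpa [InLevel, hL, hj, (by lia : j < L.length)] using
    (inLevel_iff_inLevel_succ hT (hh x) hj).symm

variable [OpensMeasurableSpace X]

/-- Every atom inside `A` is the image of the atom below it. -/
lemma IsKR.measure_preimage_of_disjoint (hT : IsKR K T) {h : X → X} (hm : Measurable h)
    (hh : ∀ x, Link T x (h x)) (hA : Compat T A) (hAm : MeasurableSet A)
    (hb : Disjoint (bases T) A) (hμ : μ ∈ K) : μ (h ⁻¹' A) = μ A := by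
  classical
  rw [← ProbabilityMeasure.map_apply μ hm.aemeasurable hAm, ← hT.sum_measure_filter hA,
    ← hT.sum_measure_filter hA]
  refine congrArg _ (Multiset.map_congr rfl fun B hB => ?_)
  obtain ⟨hB, hBA⟩ := Multiset.mem_filter.1 hB
  obtain ⟨L, hL, hBL⟩ := mem_atoms.1 hB
  have hcol := hT.isColumn L hL
  obtain ⟨j, hj, rfl⟩ := List.getElem_of_mem hBL
  rcases j with _ | j
  · obtain ⟨x, hx⟩ := hcol.base_nonempty
    exact (hb.le_bot ⟨⟨L, hL, hx⟩, hBA (base_eq_getElem hj ▸ hx)⟩).elim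
  · rw [ProbabilityMeasure.map_apply _ _ (hcol.isClopen _ hBL).2.measurableSet,
      hT.preimage_getElem_succ hh hL hj]
    exact hcol.equiv _ (List.getElem_mem _) _ hBL μ hμ

lemma IsKR.measure_preimage (hT : IsKR K T) {h : X → X} (hm : Measurable h)
    (hh : ∀ x, Link T x (h x)) (hA : Fine T A) (hAm : MeasurableSet A) (hμ : μ ∈ K) :
    μ (h ⁻¹' A) = μ A := by
  rcases hA.decides_bases with hb | hb
  · have hcompl := hT.measure_preimage_of_disjoint hm hh hA.compat.compl hAm.compl
      (Set.disjoint_compl_right_iff_subset.2 hb) hμ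
    rw [Set.preimage_compl, ← ENNReal.coe_inj] at hcompl
    rw [← compl_compl A, Set.preimage_compl, ← ENNReal.coe_inj]
    simp only [ProbabilityMeasure.ennreal_coeFn_eq_coeFn_toMeasure] at hcompl ⊢
    rw [prob_compl_eq_one_sub hAm.compl, prob_compl_eq_one_sub (hm hAm.compl), Set.preimage_compl,
      hcompl]
  · exact hT.measure_preimage_of_disjoint hm hh hA.compat hAm hb hμ

end Invariance

section PreservesLimit

variable {X : Type*} [TopologicalSpace X] [CompactSpace X] [TopologicalSpace.MetrizableSpace X]
  [TotallyDisconnectedSpace X] [MeasurableSpace X] [BorelSpace X] {K : Set (ProbabilityMeasure X)}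
  {h : X ≃ₜ X}

lemma preservesAll_of_measure_preimage_eq
    (hh : ∀ A, IsClopen A → ∀ μ ∈ K, μ (h ⁻¹' A) = μ A) : PreservesAll K h := by
  intro μ hμ
  refine (ext_of_generate_finite {A | IsClopen A} ?_ (fun A hA B hB _ => hA.inter hB)
    (fun A hA => ?_) (by simp [Measure.map_apply h.measurable])).symm
  · rw [BorelSpace.measurable_eq (α := X)]
    exact isTopologicalBasis_isClopen.borel_eq_generateFrom
  · rw [Measure.map_apply h.measurable hA.2.measurableSet]
    simpa [← ENNReal.coe_inj] using (hh A hA μ hμ).symm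

lemma IsResolving.preservesAll {Q : ℕ → ColumnFamily X} (hQ : IsResolving K Q)
    (hh : ∀ n x, Link (Q n) x (h x)) : PreservesAll K h :=
  preservesAll_of_measure_preimage_eq fun _ hA _ hμ =>
    let ⟨n, hn⟩ := hQ.exists_fine hA
    (hQ.isKR n).measure_preimage h.continuous.measurable (hh n) hn hA.2.measurableSet hμ

end PreservesLimit

/-! ### Saturation -/

section TopologicalFullGroup

variable {X : Type*} [TopologicalSpace X] {h : X ≃ₜ X}

lemma toEquiv_zpow (h : X ≃ₜ X) (n : ℤ) : (h ^ n).toEquiv = h.toEquiv ^ n :=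
  map_zpow (⟨⟨Homeomorph.toEquiv, rfl⟩, fun _ _ => rfl⟩ : (X ≃ₜ X) →* Equiv.Perm X) h n

variable {ι : Type*} {A : ι → Set X} {τ : Equiv.Perm ι} {n : ι → ℤ}

lemma bijective_of_mem_iff_zpow_mem (hpart : ∀ x, ∃! i, x ∈ A i)
    (hn : ∀ i x, x ∈ A i ↔ (h ^ n i) x ∈ A (τ i)) {f : X → X}
    (hf : ∀ i, ∀ x ∈ A i, f x = (h ^ n i) x) : Function.Bijective f := by
  constructor
  · intro x y hxy
    obtain ⟨i, hi, -⟩ := hpart x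
    obtain ⟨j, hj, -⟩ := hpart y
    rw [hf i x hi, hf j y hj] at hxy
    have hτ := (hpart _).unique ((hn i x).1 hi) (hxy ▸ (hn j y).1 hj)
    obtain rfl := τ.injective hτ
    exact (h ^ n i).injective hxy
  · intro y
    obtain ⟨j, hj, -⟩ := hpart y
    obtain ⟨i, rfl⟩ := τ.surjective j
    obtain ⟨x, rfl⟩ := (h ^ n i).surjective y
    exact ⟨x, hf i x ((hn i x).2 hj)⟩

lemma isHomeomorph_of_eqOn_zpow (hA : ∀ i, IsOpen (A i)) (hcover : ∀ x, ∃ i, x ∈ A i)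
    {f : X → X} (hf : ∀ i, ∀ x ∈ A i, f x = (h ^ n i) x) (hbij : Function.Bijective f) :
    IsHomeomorph f := by
  have hnhds : ∀ x, (nhds x).map f = nhds (f x) := by
    intro x
    obtain ⟨i, hi⟩ := hcover x
    rw [hf i x hi, ← (h ^ n i).map_nhds_eq x]
    exact Filter.map_congr (Filter.eventuallyEq_of_mem ((hA i).mem_nhds hi) (hf i))
  exact ⟨continuous_iff_continuousAt.2 fun x => (hnhds x).le,
    isOpenMap_iff_nhds_le.2 fun x => (hnhds x).ge, hbij⟩

lemma exists_inTopologicalFullGroup [Finite ι] (hA : ∀ i, IsClopen (A i))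
    (hpart : ∀ x, ∃! i, x ∈ A i) (hn : ∀ i x, x ∈ A i ↔ (h ^ n i) x ∈ A (τ i)) :
    ∃ f : X ≃ₜ X, InTopologicalFullGroup h f ∧ ∀ i, ∀ x ∈ A i, f x ∈ A (τ i) := by
  choose p hp hpu using hpart
  set f : X → X := fun x => (h ^ n (p x)) x
  have hf : ∀ i, ∀ x ∈ A i, f x = (h ^ n i) x := by
    intro i x hx
    rw [hpu x i hx]
  have hhomeo : IsHomeomorph f := isHomeomorph_of_eqOn_zpow (fun i => (hA i).isOpen)
    (fun x => ⟨p x, hp x⟩) hf (bijective_of_mem_iff_zpow_mem (fun x => ⟨p x, hp x, hpu x⟩) hn hf)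
  let e := Finite.equivFin ι
  refine ⟨hhomeo.homeomorph, ⟨Nat.card ι, A ∘ e.symm, n ∘ e.symm, fun k => hA _,
    fun x => ⟨e (p x), ?_, fun k hk => ?_⟩, fun k x hx => ?_⟩, fun i x hx => ?_⟩
  · simpa using hp x
  · exact e.symm_apply_eq.1 (hpu x _ hk)
  · rw [← toEquiv_zpow]
    exact hf _ x hx
  · change f x ∈ _
    rw [hf i x hx]
    exact (hn i x).1 hx

end TopologicalFullGroup

section Saturation

lemma exists_perm_forall_iff {ι : Type*} [Fintype ι] {p q : ι → Prop} [DecidablePred p]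
    [DecidablePred q] (h : Fintype.card {i // p i} = Fintype.card {i // q i}) :
    ∃ σ : Equiv.Perm ι, ∀ i, p i ↔ q (σ i) := by
  classical
  let e := Fintype.equivOfCardEq h
  refine ⟨e.extendSubtype, fun i => ⟨e.extendSubtype_mem i, fun hi => ?_⟩⟩
  contrapose hi
  exact e.extendSubtype_not_mem i hi

lemma card_getElem_eq_countP {α : Type*} (L : List α) (p : α → Prop) [DecidablePred p] :
    Fintype.card {i : Fin L.length // p L[i]} = L.countP (p ·) := by
  have hL : (L : Multiset α) = (Finset.univ : Finset (Fin L.length)).val.map (L[·]) := by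
    simp [Fin.univ_val_map]
  rw [← Multiset.coe_countP, hL, Multiset.countP_map, Fintype.card_subtype]
  rfl

variable {X : Type*} {L : List (Set X)} {T : ColumnFamily X} {U V : Set X} {i j : ℕ} {x : X}

lemma exists_perm_of_imbalance_eq_zero (h : imbalance U V L = 0) :
    ∃ σ : Equiv.Perm (Fin L.length), ∀ i, L[i] ⊆ U ↔ L[σ i] ⊆ V := by
  classical
  refine exists_perm_forall_iff (p := fun i : Fin L.length => L[i] ⊆ U)
    (q := fun i => L[i] ⊆ V) ?_
  rw [card_getElem_eq_countP L (· ⊆ U), card_getElem_eq_countP L (· ⊆ V)]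
  exact_mod_cast sub_eq_zero.1 h

lemma Compat.mem_iff_getElem_subset (hA : Compat T U) (hx : InLevel T L i x) :
    x ∈ U ↔ L[i]'hx.2.1 ⊆ U := by
  obtain ⟨hL, hi, hxi⟩ := hx
  refine ⟨fun hxU => ?_, fun h => h hxi⟩
  exact (hA _ (mem_atoms.2 ⟨L, hL, List.getElem_mem hi⟩)).resolve_right
    fun hd => hd.le_bot ⟨hxi, hxU⟩

variable [TopologicalSpace X] [MeasurableSpace X] {K : Set (ProbabilityMeasure X)} {h : X ≃ₜ X}

lemma inLevel_zero_iff_pow (hT : IsKR K T) (hh : ∀ x, Link T x (h x)) (hj : j < L.length) :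
    InLevel T L 0 x ↔ InLevel T L j ((h ^ j) x) := by
  induction j with
  | zero => simp
  | succ j ih =>
    rw [ih (by lia), inLevel_iff_inLevel_succ hT (hh _) hj, pow_succ']
    rfl

lemma inLevel_iff_zpow (hT : IsKR K T) (hh : ∀ x, Link T x (h x)) (hi : i < L.length)
    (hj : j < L.length) : InLevel T L i x ↔ InLevel T L j ((h ^ (j - i : ℤ)) x) := by
  obtain ⟨y, rfl⟩ := (h ^ i).surjective x
  have hpow : (h ^ (j - i : ℤ)) ((h ^ i) y) = (h ^ j) y := by
    rw [← Homeomorph.mul_apply, ← zpow_natCast h i, ← zpow_add, sub_add_cancel, zpow_natCast]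
  rw [hpow, ← inLevel_zero_iff_pow hT hh hi, inLevel_zero_iff_pow hT hh hj]

lemma IsKR.existsUnique_inLevel [DecidableEq (List (Set X))] (hT : IsKR K T) (x : X) :
    ∃! p : (L : T.toFinset) × Fin L.1.length, InLevel T p.1 p.2 x := by
  obtain ⟨L, j, hx⟩ := hT.exists_inLevel x
  refine ⟨⟨⟨L, Multiset.mem_toFinset.2 hx.1⟩, ⟨j, hx.2.1⟩⟩, hx, ?_⟩
  rintro ⟨⟨M, hM⟩, ⟨i, hi⟩⟩ hx'
  obtain ⟨rfl, rfl⟩ := InLevel.unique hx' hx hT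
  rfl

lemma IsKR.isClopen_inLevel (hT : IsKR K T) (hL : L ∈ T) (hj : j < L.length) :
    IsClopen {x | InLevel T L j x} := by
  simpa [InLevel, hL, hj] using (hT.isColumn L hL).isClopen _ (List.getElem_mem hj)

lemma exists_inTopologicalFullGroup_image_eq (hT : IsKR K T) (hh : ∀ x, Link T x (h x))
    (hU : Compat T U) (hV : Compat T V) (hbal : ∀ L ∈ T, imbalance U V L = 0) :
    ∃ f : X ≃ₜ X, InTopologicalFullGroup h f ∧ f '' U = V := by
  classical
  choose σ hσ using fun L : T.toFinset =>
    exists_perm_of_imbalance_eq_zero (hbal L (Multiset.mem_toFinset.1 L.2))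
  obtain ⟨f, hf, hmem⟩ := exists_inTopologicalFullGroup
    (A := fun p : (L : T.toFinset) × Fin L.1.length => {x | InLevel T p.1 p.2 x})
    (n := fun p => ((σ p.1 p.2 : ℕ) : ℤ) - (p.2 : ℕ)) (τ := Equiv.sigmaCongrRight σ)
    (fun p => hT.isClopen_inLevel (Multiset.mem_toFinset.1 p.1.2) p.2.2) hT.existsUnique_inLevel
    (fun p _ => inLevel_iff_zpow hT hh p.2.2 (σ p.1 p.2).2)
  have hiff : ∀ x, x ∈ U ↔ f x ∈ V := by
    intro x
    obtain ⟨p, hp, -⟩ := hT.existsUnique_inLevel x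
    rw [hU.mem_iff_getElem_subset hp, hV.mem_iff_getElem_subset (hmem p x hp)]
    exact hσ p.1 p.2
  refine ⟨f, hf, ?_⟩
  rw [show U = f ⁻¹' V from Set.ext hiff, f.image_preimage]

lemma IsResolving.kSaturated {Q : ℕ → ColumnFamily X} (hQ : IsResolving K Q)
    (hh : ∀ n x, Link (Q n) x (h x)) : KSaturated K h := by
  intro U V hU hV hUV
  obtain ⟨n, hn⟩ := hQ.exists_resolves U V hU hV
  exact exists_inTopologicalFullGroup_image_eq (hQ.isKR n) (hh n) hn.fine_left.compat
    hn.fine_right.compat (hn.imbalance_eq_zero hUV)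

end Saturation

/-! ### Kakutani–Rokhlin partitions of minimal homeomorphisms -/

section LocallyConstant

variable {X ι α : Type*} [TopologicalSpace X]

open scoped Classical in
lemma isLocallyConstant_find {P : ℕ → X → Prop} (hP : ∀ j, IsClopen {x | P j x})
    (h : ∀ x, ∃ j, P j x) : IsLocallyConstant fun x => Nat.find (h x) := by
  refine IsLocallyConstant.iff_isOpen_fiber.2 fun n => ?_
  have hfiber : (fun x => Nat.find (h x)) ⁻¹' {n} =
      {x | P n x} ∩ ⋂ j ∈ Finset.range n, {x | P j x}ᶜ := by
    ext x
    simp [Nat.find_eq_iff]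
  rw [hfiber]
  exact (hP n).isOpen.inter (isOpen_biInter_finset fun j _ => (hP j).compl.isOpen)

lemma isLocallyConstant_apply {t : X → ι} {f : ι → X → α} (ht : IsLocallyConstant t)
    (hf : ∀ i, IsLocallyConstant (f i)) : IsLocallyConstant fun x => f (t x) x := by
  refine (IsLocallyConstant.iff_eventually_eq _).2 fun x => ?_
  filter_upwards [ht.eventually_eq x, (hf (t x)).eventually_eq x] with y hty hfy
  rw [hty, hfy]

lemma isLocallyConstant_list_map {f : ι → X → α} (hf : ∀ i, IsLocallyConstant (f i))
    (l : List ι) : IsLocallyConstant fun x => l.map (f · x) := by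
  induction l with
  | nil => exact .const []
  | cons i l ih => exact (hf i).comp₂ ih List.cons

end LocallyConstant

section Labelling

/-- A description of `g` by columns: the column of `x` is recorded by its label `w x`, the height
of `x` in this column by `t x`, and the number of atoms of the column labelled `v` by `ℓ v`. -/
structure IsLabelling {X β : Type*} [TopologicalSpace X] (g : X → X) (ℓ : β → ℕ) (w : X → β)
    (t : X → ℕ) : Prop where
  isLocallyConstant_label : IsLocallyConstant w
  isLocallyConstant_height : IsLocallyConstant t
  height_lt : ∀ x, t x < ℓ (w x)
  label_apply : ∀ x, t x + 1 < ℓ (w x) → w (g x) = w x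
  height_apply : ∀ x, t x + 1 < ℓ (w x) → t (g x) = t x + 1
  height_apply_of_eq : ∀ x, t x + 1 = ℓ (w x) → t (g x) = 0

/-- The points of label `v` and height `j`. -/
def labelLevel {X β : Type*} (w : X → β) (t : X → ℕ) (v : β) (j : ℕ) : Set X :=
  {x | w x = v ∧ t x = j}

/-- The column of label `v`. -/
def labelColumn {X β : Type*} (ℓ : β → ℕ) (w : X → β) (t : X → ℕ) (v : β) : List (Set X) :=
  (List.range (ℓ v)).map (labelLevel w t v)

variable {X β : Type*} {ℓ : β → ℕ} {w : X → β} {t : X → ℕ} {v : β} {j : ℕ} {x y : X}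

open scoped Classical in
lemma coverCount_labelColumn (hx : t x < ℓ (w x)) (v : β) :
    coverCount (labelColumn ℓ w t v : Multiset (Set X)) x = if w x = v then 1 else 0 := by
  rw [coverCount, labelColumn, ← Multiset.map_coe, Multiset.countP_map, Multiset.coe_range]
  split_ifs with hv
  · subst hv
    have hcount := Multiset.count_eq_one_of_mem (Multiset.nodup_range (ℓ (w x)))
      (Multiset.mem_range.2 hx)
    simpa [labelLevel, Multiset.count, Multiset.countP_eq_card_filter] using hcount
  · simp [labelLevel, hv]

lemma mem_getElem_labelColumn :
    (∃ h : j < (labelColumn ℓ w t v).length, x ∈ (labelColumn ℓ w t v)[j]) ↔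
      j < ℓ v ∧ w x = v ∧ t x = j := by
  simp [labelColumn, labelLevel, and_left_comm]

variable [TopologicalSpace X]

namespace IsLabelling

lemma isClopen_labelLevel {g : X → X} (h : IsLabelling g ℓ w t) (v : β) (j : ℕ) :
    IsClopen (labelLevel w t v j) :=
  (h.isLocallyConstant_label.isClopen_fiber v).inter (h.isLocallyConstant_height.isClopen_fiber j)

lemma preimage_labelLevel_succ {g : X → X} (h : IsLabelling g ℓ w t) (hj : j + 1 < ℓ v) :
    g ⁻¹' labelLevel w t v (j + 1) = labelLevel w t v j := by
  ext x
  have hlt := h.height_lt x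
  constructor
  · rintro ⟨hv, ht⟩
    have hstep : t x + 1 < ℓ (w x) := by
      by_contra hle
      have := h.height_apply_of_eq x (by lia)
      lia
    have := h.height_apply x hstep
    exact ⟨(h.label_apply x hstep).symm.trans hv, by lia⟩
  · rintro ⟨rfl, rfl⟩
    exact ⟨h.label_apply x hj, h.height_apply x hj⟩

lemma labelLevel_nonempty {g : X ≃ₜ X} (h : IsLabelling g ℓ w t) (hv : v ∈ Set.range w)
    (hj : j < ℓ v) : (labelLevel w t v j).Nonempty := by
  have hiff : ∀ i, i < ℓ v → ((labelLevel w t v 0).Nonempty ↔ (labelLevel w t v i).Nonempty) := by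
    intro i hi
    induction i with
    | zero => rfl
    | succ i ih =>
      rw [ih (by lia), ← h.preimage_labelLevel_succ hi, g.surjective.nonempty_preimage]
  obtain ⟨x, rfl⟩ := hv
  exact (hiff j hj).1 ((hiff _ (h.height_lt x)).2 ⟨x, rfl, rfl⟩)

variable [MeasurableSpace X] [BorelSpace X] {K : Set (ProbabilityMeasure X)} {g : X ≃ₜ X}

lemma kEquiv_labelLevel (h : IsLabelling g ℓ w t) (hg : PreservesAll K g) (hj : j < ℓ v) :
    KEquiv K (labelLevel w t v 0) (labelLevel w t v j) := by
  induction j with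
  | zero => exact fun _ _ => rfl
  | succ j ih =>
    refine (ih (by lia)).trans fun μ hμ => ?_
    have hmap := Measure.map_apply (μ := (μ : Measure X)) g.continuous.measurable
      (h.isClopen_labelLevel v (j + 1)).isOpen.measurableSet
    rw [hg μ hμ, h.preimage_labelLevel_succ hj] at hmap
    exact congrArg ENNReal.toNNReal hmap.symm

lemma isColumn_labelColumn (h : IsLabelling g ℓ w t) (hg : PreservesAll K g)
    (hv : v ∈ Set.range w) : IsColumn K (labelColumn ℓ w t v) where
  ne_nil := by
    obtain ⟨x, rfl⟩ := hv
    have := h.height_lt x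
    simp only [labelColumn, ne_eq, List.map_eq_nil_iff, List.range_eq_nil]
    lia
  isClopen := by simpa [labelColumn] using fun j _ => h.isClopen_labelLevel v j
  nonempty := by simpa [labelColumn] using fun j => h.labelLevel_nonempty hv
  equiv := by
    simpa [labelColumn] using fun i hi j hj =>
      (h.kEquiv_labelLevel hg hi).symm.trans (h.kEquiv_labelLevel hg hj)

lemma isKR (h : IsLabelling g ℓ w t) (hg : PreservesAll K g) (hfin : (Set.range w).Finite) :
    IsKR K (hfin.toFinset.val.map (labelColumn ℓ w t)) where
  isColumn L hL := by
    obtain ⟨v, hv, rfl⟩ := Multiset.mem_map.1 hL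
    exact h.isColumn_labelColumn hg (hfin.mem_toFinset.1 hv)
  coverCount_eq x := by
    classical
    have hx : w x ∈ hfin.toFinset := hfin.mem_toFinset.2 ⟨x, rfl⟩
    rw [coverCount_atoms, Multiset.map_map]
    simp only [Function.comp_def, coverCount_labelColumn (h.height_lt x)]
    exact (Finset.sum_ite_eq hfin.toFinset (w x) fun _ => 1).trans (if_pos hx)

lemma link (h : IsLabelling g ℓ w t) (hg : PreservesAll K g) (hfin : (Set.range w).Finite)
    (hxy : Link (hfin.toFinset.val.map (labelColumn ℓ w t)) x y) :
    w y = w (g x) ∧ t y = t (g x) ∨ t y = 0 ∧ t (g x) = 0 := by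
  have hlevel : ∀ z, InLevel (hfin.toFinset.val.map (labelColumn ℓ w t))
      (labelColumn ℓ w t (w z)) (t z) z := fun z =>
    ⟨Multiset.mem_map_of_mem _ (hfin.mem_toFinset.2 ⟨z, rfl⟩),
      mem_getElem_labelColumn.2 ⟨h.height_lt z, rfl, rfl⟩⟩
  rcases (link_iff (h.isKR hg hfin) (hlevel x) (hlevel y)).1 hxy with
    ⟨hcol, hsucc⟩ | ⟨htop, hbase⟩
  · have hw := (mem_getElem_labelColumn.1 (hcol ▸ (hlevel y).2)).2.1
    have hlt : t x + 1 < ℓ (w x) := hsucc ▸ hw ▸ h.height_lt y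
    exact .inl ⟨hw.trans (h.label_apply x hlt).symm, by rw [h.height_apply x hlt, hsucc]⟩
  · exact .inr ⟨hbase, h.height_apply_of_eq x (by simpa [labelColumn] using htop)⟩

end IsLabelling

end Labelling

section Minimality

variable {X : Type*} [TopologicalSpace X] {g : X ≃ₜ X} {B : Set X}

lemma IsMinimal.symm (hg : IsMinimal g) : IsMinimal g.symm := fun x =>
  (hg x).mono <| Set.range_subset_iff.2 fun n => ⟨-n, by
    change (g.toEquiv⁻¹ ^ (-n)) x = _
    simp⟩

lemma IsMinimal.exists_iterate_mem [CompactSpace X] (hg : IsMinimal g) (hB : IsOpen B)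
    (hne : B.Nonempty) (x : X) : ∃ n : ℕ, g^[n] x ∈ B := by
  have hcover : Set.univ ⊆ ⋃ n : ℤ, (g ^ n) ⁻¹' B := fun y _ => by
    obtain ⟨_, hy, n, rfl⟩ := (hg y).inter_open_nonempty B hB hne
    simp only [← toEquiv_zpow] at hy
    exact Set.mem_iUnion.2 ⟨n, hy⟩
  obtain ⟨s, hs⟩ := isCompact_univ.elim_finite_subcover _
    (fun n : ℤ => hB.preimage (g ^ n).continuous) hcover
  obtain ⟨b, hb⟩ := s.bddBelow
  obtain ⟨n, hn, hx⟩ := Set.mem_iUnion₂.1 (hs (Set.mem_univ ((g ^ (-b)) x)))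
  obtain ⟨m, hm⟩ := Int.eq_ofNat_of_zero_le (show 0 ≤ n + -b by linarith [hb hn])
  refine ⟨m, ?_⟩
  rw [Set.mem_preimage, ← Homeomorph.mul_apply, ← zpow_add, hm, zpow_natCast] at hx
  rwa [← hom_coe_pow (fun h : X ≃ₜ X => ⇑h) rfl (fun _ _ => rfl) g m]

end Minimality

section EntryTime

variable {X : Type*}

/-- The least number of applications of `f` taking `x` into `B`, with junk value `0` if there is
none. -/
noncomputable def entryTime (f : X → X) (B : Set X) (x : X) : ℕ :=
  sInf {j | f^[j] x ∈ B}

variable {f : X → X} {B : Set X} {x : X}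

lemma iterate_entryTime_mem (h : ∃ j, f^[j] x ∈ B) : f^[entryTime f B x] x ∈ B :=
  Nat.sInf_mem h

lemma entryTime_eq_zero (hx : x ∈ B) : entryTime f B x = 0 :=
  Nat.sInf_eq_zero.2 (.inl hx)

lemma entryTime_eq_succ (h : ∃ j, f^[j] x ∈ B) (hx : x ∉ B) :
    entryTime f B x = entryTime f B (f x) + 1 := by
  classical
  obtain ⟨j, hj⟩ := h
  have hf : ∃ i, f^[i + 1] x ∈ B := by
    cases j with
    | zero => exact absurd hj hx
    | succ i => exact ⟨i, hj⟩
  rw [entryTime, entryTime, Nat.sInf_def ⟨j, hj⟩, Nat.sInf_def (s := {i | f^[i] (f x) ∈ B}) hf]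
  exact Nat.find_comp_succ ⟨j, hj⟩ hf hx

lemma isLocallyConstant_entryTime [TopologicalSpace X] (hf : Continuous f) (hB : IsClopen B)
    (h : ∀ x, ∃ j, f^[j] x ∈ B) : IsLocallyConstant (entryTime f B) := by
  classical
  have hfind : entryTime f B = fun x => Nat.find (h x) := funext fun x => Nat.sInf_def (h x)
  exact hfind ▸ isLocallyConstant_find (fun j => hB.preimage (hf.iterate j)) h

end EntryTime

section Itinerary

variable {X α : Type*} [TopologicalSpace X] {g : X ≃ₜ X} {B : Set X} {c : X → α} {x : X}

/-- The last point of `B` on the backward orbit of `x`. -/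
noncomputable def lastVisit (g : X ≃ₜ X) (B : Set X) (x : X) : X :=
  g.symm^[entryTime g.symm B x] x

/-- The values of `c` along the excursion from `B` through `x`, from the last visit of `B`
up to `x` until just before the next one. -/
noncomputable def itinerary (g : X ≃ₜ X) (B : Set X) (c : X → α) (x : X) : List α :=
  (List.range (entryTime g.symm B x + entryTime g B (g x) + 1)).map fun j =>
    c (g^[j] (lastVisit g B x))

lemma length_itinerary : (itinerary g B c x).length =
    entryTime g.symm B x + entryTime g B (g x) + 1 := by
  simp [itinerary]

lemma itinerary_getElem?_entryTime : (itinerary g B c x)[entryTime g.symm B x]? = some (c x) := by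
  have hx : g^[entryTime g.symm B x] (lastVisit g B x) = x :=
    Function.LeftInverse.iterate g.apply_symm_apply _ x
  simp [itinerary, hx]

lemma entryTime_symm_apply (h : ∃ j, g.symm^[j] (g x) ∈ B) (hx : g x ∉ B) :
    entryTime g.symm B (g x) = entryTime g.symm B x + 1 := by
  rw [entryTime_eq_succ h hx, g.symm_apply_apply]

lemma itinerary_apply (h : ∃ j, g.symm^[j] (g x) ∈ B) (h' : ∃ j, g^[j] (g x) ∈ B)
    (hx : g x ∉ B) : itinerary g B c (g x) = itinerary g B c x := by
  have hage := entryTime_symm_apply h hx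
  have hlife := entryTime_eq_succ h' hx
  have hbase : lastVisit g B (g x) = lastVisit g B x := by
    rw [lastVisit, hage, Function.iterate_succ_apply, g.symm_apply_apply, lastVisit]
  rw [itinerary, itinerary, hbase, hage, hlife]
  congr 2
  lia

lemma isLocallyConstant_itinerary (hB : IsClopen B) (h : ∀ x, ∃ j, g.symm^[j] x ∈ B)
    (h' : ∀ x, ∃ j, g^[j] x ∈ B) (hc : IsLocallyConstant c) :
    IsLocallyConstant (itinerary g B c) := by
  have hage := isLocallyConstant_entryTime g.symm.continuous hB h
  have hlife := (isLocallyConstant_entryTime g.continuous hB h').comp_continuous g.continuous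
  exact isLocallyConstant_apply (hage.prodMk hlife)
    (f := fun n x => (List.range (n.1 + n.2 + 1)).map fun j => c (g^[j] (g.symm^[n.1] x)))
    fun n => isLocallyConstant_list_map (f := fun j x => c (g^[j] (g.symm^[n.1] x)))
      (fun j => hc.comp_continuous
        ((g.continuous.iterate j).comp (g.symm.continuous.iterate n.1))) _

lemma isLabelling_itinerary (hB : IsClopen B) (h : ∀ x, ∃ j, g.symm^[j] x ∈ B)
    (h' : ∀ x, ∃ j, g^[j] x ∈ B) (hc : IsLocallyConstant c) :
    IsLabelling g List.length (itinerary g B c) (entryTime g.symm B) := by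
  have hnot : ∀ x, entryTime g.symm B x + 1 < (itinerary g B c x).length → g x ∉ B := by
    intro x hlt hx
    rw [length_itinerary, entryTime_eq_zero hx] at hlt
    lia
  refine ⟨isLocallyConstant_itinerary hB h h' hc,
    isLocallyConstant_entryTime g.symm.continuous hB h, fun x => ?_,
    fun x hlt => itinerary_apply (h _) (h' _) (hnot x hlt),
    fun x hlt => entryTime_symm_apply (h _) (hnot x hlt), fun x heq => entryTime_eq_zero ?_⟩
  · rw [length_itinerary]
    lia
  · have hzero : entryTime g B (g x) = 0 := by
      rw [length_itinerary] at heq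
      lia
    simpa [hzero] using iterate_entryTime_mem (h' (g x))

variable [CompactSpace X] [MeasurableSpace X] [BorelSpace X] {K : Set (ProbabilityMeasure X)}

lemma IsMinimal.exists_isKR_link [Nonempty X] (hmin : IsMinimal g) (hg : PreservesAll K g)
    (hc : IsLocallyConstant c) : ∃ T, IsKR K T ∧ ∀ x y, Link T x y → c y = c (g x) := by
  obtain ⟨x₀⟩ := ‹Nonempty X›
  have hB : IsClopen (c ⁻¹' {c x₀}) := hc.isClopen_fiber (c x₀)
  have hback := hmin.symm.exists_iterate_mem hB.isOpen ⟨x₀, rfl⟩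
  have hlab := isLabelling_itinerary hB hback (hmin.exists_iterate_mem hB.isOpen ⟨x₀, rfl⟩) hc
  have hfin := hlab.isLocallyConstant_label.range_finite
  refine ⟨_, hlab.isKR hg hfin, fun x y hxy => ?_⟩
  have hmem : ∀ z, entryTime g.symm (c ⁻¹' {c x₀}) z = 0 → c z = c x₀ := fun z hz => by
    simpa [hz] using iterate_entryTime_mem (hback z)
  rcases hlab.link hg hfin hxy with ⟨hw, ht⟩ | ⟨hy, hgx⟩
  · have hval := itinerary_getElem?_entryTime (g := g) (B := c ⁻¹' {c x₀}) (c := c) (x := y)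
    rw [hw, ht, itinerary_getElem?_entryTime] at hval
    exact (Option.some_injective _ hval).symm
  · rw [hmem y hy, hmem _ hgx]

end Itinerary

/-! ### Approximation -/

section Approximation

variable {X : Type*} [TopologicalSpace X] [CompactSpace X] [TopologicalSpace.MetrizableSpace X]
  [TotallyDisconnectedSpace X]

lemma exists_isLocallyConstant_forall_dist_lt {Y : Type*} [MetricSpace Y] [CompactSpace Y]
    [TotallyDisconnectedSpace Y] {ε : ℝ} (hε : 0 < ε) :
    ∃ (n : ℕ) (c : Y → Fin n), IsLocallyConstant c ∧ ∀ x y, c x = c y → dist x y < ε := by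
  have hS : {p : Y × Y | dist p.1 p.2 < ε / 2} ∈ nhdsSet (Set.diagonal Y) :=
    (isOpen_lt continuous_dist continuous_const).mem_nhdsSet.2 <| by
      rintro p (hp : p.1 = p.2)
      simpa [hp] using hε
  obtain ⟨n, c, z, hc, hz⟩ :=
    (ContinuousMap.id Y).exists_finite_approximation_of_mem_nhds_diagonal hS
  refine ⟨n, c, (IsLocallyConstant.iff_continuous c).2 hc, fun x y hxy => ?_⟩
  have hx : dist x (z (c x)) < ε / 2 := hz x
  have hy : dist y (z (c x)) < ε / 2 := hxy ▸ hz y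
  linarith [dist_triangle_right x y (z (c x))]

lemma mem_closure_of_forall_isLocallyConstant {S : Set (X ≃ₜ X)} {g : X ≃ₜ X}
    (hS : ∀ (n : ℕ) (c : X → Fin n), IsLocallyConstant c → ∃ h ∈ S, ∀ x, c (h x) = c (g x)) :
    g ∈ closure S := by
  let _ := TopologicalSpace.metrizableSpaceMetric X
  refine closure_induced.2 (Metric.mem_closure_iff.2 fun ε hε => ?_)
  obtain ⟨n, c, hc, hclose⟩ := exists_isLocallyConstant_forall_dist_lt (Y := X) hε
  obtain ⟨h, hhS, hh⟩ := hS n c hc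
  exact ⟨_, ⟨h, hhS, rfl⟩, (ContinuousMap.dist_lt_iff hε).2 fun x => hclose _ _ (hh x).symm⟩

variable [Nonempty X] [MeasurableSpace X] [BorelSpace X] {K : Set (ProbabilityMeasure X)}

lemma CompactGoodFamily.exists_kSaturated_apply_eq {α : Type*} {g : X ≃ₜ X} {c : X → α}
    (hK : CompactGoodFamily K) (hg : PreservesAll K g) (hmin : IsMinimal g)
    (hc : IsLocallyConstant c) :
    ∃ h : X ≃ₜ X, (PreservesAll K h ∧ KSaturated K h) ∧ ∀ x, c (h x) = c (g x) := by
  obtain ⟨T, hT, hlink⟩ := hmin.exists_isKR_link hg hc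
  obtain ⟨Q, rfl, hQ⟩ := exists_isResolving hK hT
  obtain ⟨h, hh⟩ := hQ.exists_homeomorph
  exact ⟨h, ⟨hQ.preservesAll hh, hQ.kSaturated hh⟩, fun x => hlink _ _ (hh 0 x)⟩

end Approximation

end DynSimplex

theorem minimal_mem_closure_saturated_general
    {X : Type*} [TopologicalSpace X] [CompactSpace X]
    [TopologicalSpace.MetrizableSpace X] [TotallyDisconnectedSpace X]
    [Nonempty X] [MeasurableSpace X] [BorelSpace X]
    (K : Set (ProbabilityMeasure X)) (hne : K.Nonempty) (hcpt : IsCompact K)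
    (hK : ∀ μ ∈ K, DynSimplex.Atomless μ ∧ DynSimplex.FullSupport μ)
    (hgood : DynSimplex.Good K)
    (g : X ≃ₜ X) (hg : DynSimplex.PreservesAll K g) (hmin : DynSimplex.IsMinimal g) :
    g ∈ closure {h : X ≃ₜ X |
      DynSimplex.PreservesAll K h ∧ DynSimplex.KSaturated K h} :=
  have hfam : DynSimplex.CompactGoodFamily K :=
    ⟨⟨hne, fun μ hμ => (hK μ hμ).2, hgood⟩, hcpt, fun μ hμ => (hK μ hμ).1⟩
  DynSimplex.mem_closure_of_forall_isLocallyConstant fun _ _ hc =>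
    hfam.exists_kSaturated_apply_eq hg hmin hc

theorem minimal_mem_closure_saturated
    {X : Type*} [TopologicalSpace X] [CompactSpace X]
    [TopologicalSpace.MetrizableSpace X] [TotallyDisconnectedSpace X] [PerfectSpace X]
    [Nonempty X] [MeasurableSpace X] [BorelSpace X]
    (K : Set (MeasureTheory.ProbabilityMeasure X)) (hK : DynSimplex.DynamicalSimplex K)
    (g : X ≃ₜ X) (hg : DynSimplex.PreservesAll K g) (hmin : DynSimplex.IsMinimal g) :
    g ∈ closure {h : X ≃ₜ X |
      DynSimplex.PreservesAll K h ∧ DynSimplex.KSaturated K h} :=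
  have ⟨hne, hcpt, _, hsupp, hgood, _⟩ := hK
  minimal_mem_closure_saturated_general K hne hcpt hsupp hgood g hg hmin
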